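/- arXiv:1802.02837 — 4 statements merged into one kernel-verified Lean document; each statement's English description precedes it below -/
import Mathlib

section
/- Let m ≥ n ≥ 1 be integers. For A ∈ Matrix (Fin m) (Fin n) ℝ let S(A) = {(X,Y) ∈ 𝔰𝔬(m) × 𝔰𝔬(n) : X·A = A·Y} and T(A) = {X·A − A·Y : X ∈ 𝔰𝔬(m), Y ∈ 𝔰𝔬(n)} (a linear subspace of the matrix space). Then the minimum over all A of dim_ℝ S(A) equals (m−n)(m−n−1)/2, and the maximum over all A of dim_ℝ T(A) equals mn − n. Equivalently, the action of SO(m)×SO(n) on m×n real matrices by (g,h)·A = g A hᵀ has principal isotropy groups of dimension dim SO(m−n) and cohomogeneity n. -/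
open Matrix

/-- `S(A) = {(X,Y) ∈ 𝔰𝔬(m) × 𝔰𝔬(n) : X·A = A·Y}`. -/
def stabSet0 {m n : ℕ} (A : Matrix (Fin m) (Fin n) ℝ) :
    Set (Matrix (Fin m) (Fin m) ℝ × Matrix (Fin n) (Fin n) ℝ) :=
  {p | p.1ᵀ = -p.1 ∧ p.2ᵀ = -p.2 ∧ p.1 * A = A * p.2}

/-- `T(A) = {X·A − A·Y : X ∈ 𝔰𝔬(m), Y ∈ 𝔰𝔬(n)}`. -/
def tangSet0 {m n : ℕ} (A : Matrix (Fin m) (Fin n) ℝ) :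
    Set (Matrix (Fin m) (Fin n) ℝ) :=
  {B | ∃ X : Matrix (Fin m) (Fin m) ℝ, ∃ Y : Matrix (Fin n) (Fin n) ℝ,
    Xᵀ = -X ∧ Yᵀ = -Y ∧ B = X * A - A * Y}

def skewSub (k : ℕ) : Submodule ℝ (Matrix (Fin k) (Fin k) ℝ) where
  carrier := {X | Xᵀ = -X}
  zero_mem' := by simp
  add_mem' := by
    intro a b ha hb
    simp only [Set.mem_ofPred_eq] at *
    rw [transpose_add, ha, hb, neg_add]
  smul_mem' := by
    intro c a ha
    simp only [Set.mem_ofPred_eq] at *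
    rw [transpose_smul, ha, smul_neg]

theorem mem_skewSub {k : ℕ} {X : Matrix (Fin k) (Fin k) ℝ} : X ∈ skewSub k ↔ Xᵀ = -X := Iff.rfl

theorem skew_apply {k : ℕ} {X : Matrix (Fin k) (Fin k) ℝ} (h : Xᵀ = -X) (i j : Fin k) :
    X j i = - X i j := by
  have := congrFun (congrFun h i) j
  simpa using this

def skewEquiv (k : ℕ) : skewSub k ≃ₗ[ℝ] ((Σ i : Fin k, Fin i.val) → ℝ) where
  toFun X p := X.1 p.1 ⟨p.2.1, p.2.2.trans p.1.2⟩
  map_add' _ _ := rfl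
  map_smul' _ _ := rfl
  invFun f := ⟨Matrix.of fun i j => if h : j.val < i.val then f ⟨i, ⟨j, h⟩⟩ else
      if h : i.val < j.val then - f ⟨j, ⟨i, h⟩⟩ else 0, by
    rw [mem_skewSub]
    ext i j
    simp only [transpose_apply, of_apply, Matrix.neg_apply]
    rcases lt_trichotomy i.val j.val with h | h | h
    · rw [dif_pos h, dif_neg h.not_gt, dif_pos h, neg_neg]
    · rw [dif_neg h.not_lt, dif_neg h.not_gt, dif_neg h.not_gt, dif_neg h.not_lt, neg_zero]
    · rw [dif_neg h.not_gt, dif_pos h, dif_pos h]⟩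
  left_inv X := by
    ext i j
    simp only [of_apply]
    rcases lt_trichotomy i.val j.val with h | h | h
    · simp [h, h.not_gt, skew_apply X.2 i j]
    · obtain rfl := Fin.ext h
      have := skew_apply X.2 i i
      simp; linarith
    · simp [h]
  right_inv f := by
    ext ⟨i, j⟩
    simp only [of_apply]
    rw [dif_pos j.2]

theorem finrank_skew (k : ℕ) : Module.finrank ℝ (skewSub k) = k * (k - 1) / 2 := by
  rw [(skewEquiv k).finrank_eq, Module.finrank_fintype_fun_eq_card, Fintype.card_sigma]
  simp only [Fintype.card_fin]
  rw [Fin.sum_univ_eq_sum_range (fun i => i), Finset.sum_range_id]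

def actMap {m n : ℕ} (A : Matrix (Fin m) (Fin n) ℝ) :
    (skewSub m × skewSub n) →ₗ[ℝ] Matrix (Fin m) (Fin n) ℝ where
  toFun p := p.1.1 * A - A * p.2.1
  map_add' p q := by simp [Matrix.add_mul, Matrix.mul_add]; abel
  map_smul' c p := by simp [smul_sub]

theorem span_tang {m n : ℕ} (A : Matrix (Fin m) (Fin n) ℝ) :
    Submodule.span ℝ (tangSet0 A) = LinearMap.range (actMap A) := by
  have : tangSet0 A = (LinearMap.range (actMap A) : Set _) := by
    ext B
    constructor
    · rintro ⟨X, Y, hX, hY, rfl⟩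
      exact ⟨(⟨X, hX⟩, ⟨Y, hY⟩), rfl⟩
    · rintro ⟨⟨X, Y⟩, rfl⟩
      exact ⟨X.1, Y.1, X.2, Y.2, rfl⟩
  rw [this, Submodule.span_eq]

theorem span_stab {m n : ℕ} (A : Matrix (Fin m) (Fin n) ℝ) :
    Module.finrank ℝ (Submodule.span ℝ (stabSet0 A)) = 
      Module.finrank ℝ (LinearMap.ker (actMap A)) := by
  let ι := (skewSub m).subtype.prodMap (skewSub n).subtype
  have hι : Function.Injective ι :=
    Function.Injective.prodMap Subtype.val_injective Subtype.val_injective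
  have : stabSet0 A = ((LinearMap.ker (actMap A)).map ι : Set _) := by
    ext B
    constructor
    · rintro ⟨hX, hY, h⟩
      exact ⟨(⟨B.1, hX⟩, ⟨B.2, hY⟩), sub_eq_zero.2 h, rfl⟩
    · rintro ⟨⟨X, Y⟩, h, rfl⟩
      exact ⟨X.2, Y.2, sub_eq_zero.1 h⟩
  rw [this, Submodule.span_eq]
  exact (Submodule.equivMapOfInjective ι hι _).finrank_eq.symm

theorem rank_null {m n : ℕ} (A : Matrix (Fin m) (Fin n) ℝ) :
    Module.finrank ℝ (LinearMap.range (actMap A)) + Module.finrank ℝ (LinearMap.ker (actMap A))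
     = m * (m - 1) / 2 + n * (n - 1) / 2 := by
  rw [LinearMap.finrank_range_add_finrank_ker, Module.finrank_prod, finrank_skew, finrank_skew]

theorem arith (m n : ℕ) (hmn : n ≤ m) : m * (m - 1) / 2 + n * (n - 1) / 2 = 
    (m * n - n) + (m - n) * (m - n - 1) / 2 := by
  obtain ⟨d, rfl⟩ := Nat.exists_eq_add_of_le hmn
  rw [Nat.add_sub_cancel_left, ← Nat.choose_two_right, ← Nat.choose_two_right,
    ← Nat.choose_two_right]
  have h : n ≤ (n + d) * n := by
    rcases n with _ | n
    · simp
    · nlinarith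
  zify [h]
  have e := Nat.cast_choose_two ℚ
  qify
  rw [e, e, e]
  push_cast
  ring

/-- diagonal functional -/
def phi {m n : ℕ} (u : Fin n → Fin m → ℝ) (v : Fin n → Fin n → ℝ) :
    Matrix (Fin m) (Fin n) ℝ →ₗ[ℝ] (Fin n → ℝ) where
  toFun C i := u i ⬝ᵥ (C *ᵥ v i)
  map_add' C D := by ext; simp [add_mulVec]
  map_smul' c D := by ext; simp [smul_mulVec]

theorem skew_quad {k : ℕ} {X : Matrix (Fin k) (Fin k) ℝ} (h : Xᵀ = -X) (u : Fin k → ℝ) :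
    u ⬝ᵥ (X *ᵥ u) = 0 := by
  have : u ⬝ᵥ (X *ᵥ u) = - (u ⬝ᵥ (X *ᵥ u)) := by
    conv_lhs => rw [dotProduct_mulVec, ← mulVec_transpose, h, neg_mulVec, neg_dotProduct,
      dotProduct_comm]
  linarith

theorem phi_ker {m n : ℕ} (u : Fin n → Fin m → ℝ) (v : Fin n → Fin n → ℝ)
    (hu : ∀ i j, u i ⬝ᵥ u j = if i = j then 1 else 0)
    (hv : ∀ i j, v i ⬝ᵥ v j = if i = j then 1 else 0) :
    Module.finrank ℝ (LinearMap.ker (phi u v)) = m * n - n := by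
  have hs : LinearMap.range (phi u v) = ⊤ := by
    rw [LinearMap.range_eq_top]
    intro c
    refine ⟨∑ j, c j • vecMulVec (u j) (v j), ?_⟩
    ext i
    rw [map_sum, Finset.sum_apply]
    rw [Finset.sum_eq_single i]
    · simp [phi, vecMulVec_mulVec, hu, hv]
    · intro j _ hj
      simp [phi, vecMulVec_mulVec, hv, hj]
    · simp
  have := LinearMap.finrank_range_add_finrank_ker (phi u v)
  rw [hs, finrank_top, Module.finrank_fintype_fun_eq_card, Module.finrank_matrix] at this
  simp at this
  omega

theorem range_le {m n : ℕ} (A : Matrix (Fin m) (Fin n) ℝ) (σ : Fin n → ℝ)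
    (u : Fin n → Fin m → ℝ) (v : Fin n → Fin n → ℝ)
    (h1 : ∀ i, A *ᵥ v i = σ i • u i) (h2 : ∀ i, u i ᵥ* A = σ i • v i) :
    LinearMap.range (actMap A) ≤ LinearMap.ker (phi u v) := by
  rintro _ ⟨⟨X, Y⟩, rfl⟩
  rw [LinearMap.mem_ker]
  ext i
  change u i ⬝ᵥ ((X.1 * A - A * Y.1) *ᵥ v i) = 0
  rw [sub_mulVec, dotProduct_sub, ← mulVec_mulVec, ← mulVec_mulVec, h1, mulVec_smul,
    dotProduct_smul, skew_quad X.2, dotProduct_mulVec, h2, smul_dotProduct, skew_quad Y.2]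
  simp

theorem svd {m n : ℕ} (hmn : n ≤ m) (A : Matrix (Fin m) (Fin n) ℝ) :
    ∃ (σ : Fin n → ℝ) (u : Fin n → Fin m → ℝ) (v : Fin n → Fin n → ℝ),
    (∀ i j, u i ⬝ᵥ u j = if i = j then 1 else 0) ∧
    (∀ i j, v i ⬝ᵥ v j = if i = j then 1 else 0) ∧ 
    (∀ i, A *ᵥ v i = σ i • u i) ∧ (∀ i, u i ᵥ* A = σ i • v i) := by
  have hH : (Aᵀ * A).IsHermitian := by
    have := isHermitian_conjTranspose_mul_self A
    rwa [conjTranspose_eq_transpose_of_trivial] at this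
  let b := hH.eigenvectorBasis
  let v : Fin n → Fin n → ℝ := fun i => (b i).ofLp
  have hv : ∀ i j, v i ⬝ᵥ v j = if i = j then 1 else 0 := by
    intro i j
    have := orthonormal_iff_ite.1 b.orthonormal i j
    rw [EuclideanSpace.inner_eq_star_dotProduct] at this
    rw [← this, dotProduct_comm]; simp [v]
  have hev : ∀ i, (Aᵀ * A) *ᵥ v i = hH.eigenvalues i • v i := hH.mulVec_eigenvectorBasis
  have hAA : ∀ i j, (A *ᵥ v i) ⬝ᵥ (A *ᵥ v j) = if i = j then hH.eigenvalues i else 0 := by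
    intro i j
    rw [dotProduct_mulVec, ← mulVec_transpose, mulVec_mulVec, hev, smul_dotProduct, hv]
    simp
  have hpos : ∀ i, 0 ≤ hH.eigenvalues i := by
    intro i
    have := hAA i i
    rw [if_pos rfl] at this
    rw [← this]
    exact Finset.sum_nonneg fun j _ => mul_self_nonneg _
  let σ : Fin n → ℝ := fun i => √(hH.eigenvalues i)
  have hσ : ∀ i, σ i * σ i = hH.eigenvalues i := fun i => Real.mul_self_sqrt (hpos i)
  let w : Fin m → EuclideanSpace ℝ (Fin m) := fun i =>
    if h : i.val < n then WithLp.toLp 2 ((σ ⟨i, h⟩)⁻¹ • (A *ᵥ v ⟨i, h⟩)) else 0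
  let s : Set (Fin m) := {i | ∃ h : i.val < n, σ ⟨i, h⟩ ≠ 0}
  have hw : Orthonormal ℝ (s.domRestrict w) := by
    rw [orthonormal_iff_ite]
    rintro ⟨i, hi, hi'⟩ ⟨j, hj, hj'⟩
    simp only [Set.domRestrict_apply, w, hi, hj, dif_pos]
    rw [EuclideanSpace.inner_eq_star_dotProduct]
    simp only [star_trivial, smul_dotProduct, dotProduct_smul, hAA]
    by_cases hij : i = j
    · subst hij
      simp only [if_true, ← hσ]
      simp only [smul_eq_mul]
      field_simp
    · have : j ≠ i := fun h => hij h.symm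
      simp [hij, this, Fin.ext_iff] 
      intro h; exact absurd (Fin.ext h.symm) hij
  obtain ⟨c, hc⟩ := hw.exists_orthonormalBasis_extension_of_card_eq (by simp)
  let u : Fin n → Fin m → ℝ := fun i => (c (Fin.castLE hmn i)).ofLp
  have hu : ∀ i j, u i ⬝ᵥ u j = if i = j then 1 else 0 := by
    intro i j
    have := orthonormal_iff_ite.1 c.orthonormal (Fin.castLE hmn i) (Fin.castLE hmn j)
    rw [EuclideanSpace.inner_eq_star_dotProduct] at this
    rw [dotProduct_comm]
    simpa [u] using this
  have h1 : ∀ i, A *ᵥ v i = σ i • u i := by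
    intro i
    by_cases h : σ i = 0
    · have h0 := hAA i i
      rw [if_pos rfl, ← hσ, h, mul_zero] at h0
      rw [h, zero_smul]
      exact dotProduct_self_eq_zero.1 h0
    · have := hc (Fin.castLE hmn i) ⟨i.2, h⟩
      simp only [u, this, w]
      simp [smul_smul, h]
  refine ⟨σ, u, v, hu, hv, h1, ?_⟩
  intro i
  -- test against the basis v
  have key : ∀ j, (u i ᵥ* A - σ i • v i) ⬝ᵥ v j = 0 := by
    intro j
    rw [sub_dotProduct, ← dotProduct_mulVec, h1, smul_dotProduct, dotProduct_smul, hu, hv]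
    by_cases hij : i = j
    · simp [hij]
    · simp [hij]
  have : WithLp.toLp 2 (u i ᵥ* A - σ i • v i) = (0 : EuclideanSpace ℝ (Fin n)) := by
    apply InnerProductSpace.ext_inner_left_basis b.toBasis
    intro j
    rw [EuclideanSpace.inner_eq_star_dotProduct]
    simpa [v] using key j
  have := congrArg WithLp.ofLp this
  exact sub_eq_zero.1 this

theorem upper {m n : ℕ} (hmn : n ≤ m) (A : Matrix (Fin m) (Fin n) ℝ) :
    Module.finrank ℝ (LinearMap.range (actMap A)) ≤ m * n - n := by
  obtain ⟨σ, u, v, hu, hv, h1, h2⟩ := svd hmn A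
  rw [← phi_ker u v hu hv]
  exact Submodule.finrank_mono (range_le A σ u v h1 h2)

def DD (m n : ℕ) : Matrix (Fin m) (Fin n) ℝ :=
  Matrix.of fun i j => if i.val = j.val then (j.val : ℝ) + 1 else 0

theorem lower {m n : ℕ} (hmn : n ≤ m) :
    m * n - n ≤ Module.finrank ℝ (LinearMap.range (actMap (DD m n))) := by
  let u : Fin n → Fin m → ℝ := fun i => Pi.single (Fin.castLE hmn i) 1
  let v : Fin n → Fin n → ℝ := fun i => Pi.single i 1
  rw [← phi_ker u v (by intro i j; simp [u, Pi.single_apply, eq_comm])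
    (by intro i j; simp [v, Pi.single_apply, eq_comm])]
  apply Submodule.finrank_mono
  intro C hC
  have hC0 : ∀ i, C (Fin.castLE hmn i) i = 0 := by
    intro i
    have := congrFun (LinearMap.mem_ker.1 hC) i
    simpa [phi, u, v] using this
  let s : ℕ → ℝ := fun i => i + 1
  have hs : ∀ i, 0 < s i := fun i => by positivity
  have hsne : ∀ i j, i ≠ j → s j ^ 2 - s i ^ 2 ≠ 0 := by
    intro i j h h'
    have h2 : s j = s i := by
      have := (sq_eq_sq₀ (hs j).le (hs i).le).1 (sub_eq_zero.1 h')
      exact this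
    apply h
    simp only [s] at h2
    exact_mod_cast (add_right_cancel h2).symm
  let c : ℕ → ℕ → ℝ := fun i j => if h : i < m ∧ j < n then C ⟨i, h.1⟩ ⟨j, h.2⟩ else 0
  have hc : ∀ i : Fin m, ∀ j : Fin n, C i j = c i j := by
    intro i j; simp [c]
  have hc0 : ∀ i < n, c i i = 0 := by
    intro i h
    simpa [c, h, h.trans_le hmn] using hC0 ⟨i, h⟩
  let x : ℕ → ℕ → ℝ := fun i j =>
    if i < n then
      if j < n then (s j * c i j + s i * c j i) / (s j ^ 2 - s i ^ 2) else - (c j i / s i)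
    else if j < n then c i j / s j else 0
  let y : ℕ → ℕ → ℝ := fun i j => (s i * c i j + s j * c j i) / (s j ^ 2 - s i ^ 2)
  have hx : ∀ i j, x j i = - x i j := by
    intro i j
    simp only [x]
    split_ifs
    · rw [← neg_sub (s j ^ 2), div_neg, add_comm]
    all_goals simp
  have hy : ∀ i j, y j i = - y i j := by
    intro i j
    simp only [y]
    rw [← neg_sub (s j ^ 2), div_neg, add_comm]
  have hxy : ∀ i j, j < n → x i j * s j - (if i < n then s i * y i j else 0) = c i j := by
    intro i j hj
    simp only [x, y, hj, if_true]
    by_cases hi : i < n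
    · simp only [hi, if_true]
      by_cases hij : i = j
      · subst hij; simp [hc0 i hi]
      · have := hsne i j hij
        field_simp
        ring
    · have := (hs j).ne'
      simp only [hi, if_false]
      field_simp
      simp
  refine ⟨(⟨Matrix.of fun i j => x i j, ?_⟩, ⟨Matrix.of fun i j => y i j, ?_⟩), ?_⟩
  · ext i j; exact hx i j
  · ext i j; exact hy i j
  · ext i j
    rw [hc, ← hxy i j j.2]
    change (_ * _ - _ * _ : Matrix _ _ ℝ) i j = _
    rw [Matrix.sub_apply, mul_apply, mul_apply]
    congr 1
    · rw [Finset.sum_eq_single (Fin.castLE hmn j)]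
      · simp [DD, s]
      · intro k _ hk
        have : k.val ≠ j.val := fun h => hk (Fin.ext h)
        simp [DD, this]
      · simp
    · by_cases hi : i.val < n
      · rw [if_pos hi, Finset.sum_eq_single ⟨i, hi⟩]
        · simp [DD, s]
        · intro k _ hk
          have : i.val ≠ k.val := fun h => hk (Fin.ext h.symm)
          simp [DD, this]
        · simp
      · rw [if_neg hi]
        apply Finset.sum_eq_zero
        intro k _
        have : i.val ≠ k.val := fun h => hi (h ▸ k.2)
        simp [DD, this]

theorem stmt0 (m n : ℕ) (hn : 1 ≤ n) (hmn : n ≤ m) :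
    IsLeast {d : ℕ | ∃ A : Matrix (Fin m) (Fin n) ℝ,
        d = Module.finrank ℝ (Submodule.span ℝ (stabSet0 A))}
      ((m - n) * (m - n - 1) / 2) ∧
    IsGreatest {d : ℕ | ∃ A : Matrix (Fin m) (Fin n) ℝ,
        d = Module.finrank ℝ (Submodule.span ℝ (tangSet0 A))}
      (m * n - n) := by
  have ha := arith m n hmn
  have hD := le_antisymm (upper hmn (DD m n)) (lower hmn)
  refine ⟨⟨⟨DD m n, ?_⟩, ?_⟩, ⟨⟨DD m n, ?_⟩, ?_⟩⟩
  · rw [span_stab]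
    have := rank_null (DD m n)
    omega
  · rintro d ⟨A, rfl⟩
    rw [span_stab]
    have := rank_null A
    have := upper hmn A
    omega
  · rw [span_tang, hD]
  · rintro d ⟨A, rfl⟩
    rw [span_tang]
    exact upper hmn A
end

section
/- Let m ≥ n ≥ 1 be integers and let ℍ denote the quaternions. For A ∈ Matrix (Fin m) (Fin n) ℍ let S(A) = {(X,Y) ∈ 𝔰𝔭(m) × 𝔰𝔭(n) : X·A = A·Y} and T(A) = {X·A − A·Y : X ∈ 𝔰𝔭(m), Y ∈ 𝔰𝔭(n)}, regarded as real vector spaces. Then the minimum over all A of dim_ℝ S(A) equals (m−n)(2(m−n)+1) + 3n, and the maximum over all A of dim_ℝ T(A) equals 4mn − n. Equivalently, the action of Sp(m)×Sp(n) on m×n quaternionic matrices by (g,h)·A = g A h* has principal isotropy groups of dimension dim(Sp(m−n)×Sp(1)ⁿ) and cohomogeneity n. -/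
open Matrix Quaternion

/-- `S(A) = {(X,Y) ∈ 𝔰𝔭(m) × 𝔰𝔭(n) : X·A = A·Y}` (skew-Hermitian quaternionic matrices). -/
def stabSet2 {m n : ℕ} (A : Matrix (Fin m) (Fin n) (Quaternion ℝ)) :
    Set (Matrix (Fin m) (Fin m) (Quaternion ℝ) × Matrix (Fin n) (Fin n) (Quaternion ℝ)) :=
  {p | p.1ᴴ = -p.1 ∧ p.2ᴴ = -p.2 ∧ p.1 * A = A * p.2}

/-- `T(A) = {X·A − A·Y : X ∈ 𝔰𝔭(m), Y ∈ 𝔰𝔭(n)}`. -/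
def tangSet2 {m n : ℕ} (A : Matrix (Fin m) (Fin n) (Quaternion ℝ)) :
    Set (Matrix (Fin m) (Fin n) (Quaternion ℝ)) :=
  {B | ∃ X : Matrix (Fin m) (Fin m) (Quaternion ℝ), ∃ Y : Matrix (Fin n) (Fin n) (Quaternion ℝ),
    Xᴴ = -X ∧ Yᴴ = -Y ∧ B = X * A - A * Y}

namespace Sp2

lemma ct_smul {p q : ℕ} (c : ℝ) (A : Matrix (Fin p) (Fin q) (Quaternion ℝ)) :
    (c • A)ᴴ = c • Aᴴ := by
  ext1 i j
  simp only [conjTranspose_apply, Matrix.smul_apply, Quaternion.star_smul]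

/-- skew-Hermitian matrices -/
noncomputable def sk (k : ℕ) : Submodule ℝ (Matrix (Fin k) (Fin k) (Quaternion ℝ)) where
  carrier := {X | Xᴴ = -X}
  zero_mem' := by simp
  add_mem' := by
    intro a b ha hb
    simp only [Set.mem_ofPred_eq] at *
    rw [conjTranspose_add, ha, hb, neg_add]
  smul_mem' := by
    intro c a ha
    simp only [Set.mem_ofPred_eq] at *
    rw [ct_smul, ha, smul_neg]

lemma mem_sk {k : ℕ} {X : Matrix (Fin k) (Fin k) (Quaternion ℝ)} : X ∈ sk k ↔ Xᴴ = -X := Iff.rfl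

/-- coordinates -/
noncomputable def coords (k : ℕ) : sk k →ₗ[ℝ] ((j : Fin k) → (Fin j → Quaternion ℝ) × (ℝ × ℝ × ℝ)) where
  toFun X := fun j => (fun i => X.1 (Fin.castLE j.2.le i) j,
    ((X.1 j j).imI, (X.1 j j).imJ, (X.1 j j).imK))
  map_add' := by intro X Y; ext <;> simp
  map_smul' := by intro c X; ext <;> simp

lemma coords_inj (k : ℕ) : Function.Injective (coords k) := by
  rw [injective_iff_map_eq_zero]
  rintro ⟨X, hX⟩ h
  have hX' : ∀ i j, star (X j i) = - X i j := fun i j => congrFun (congrFun hX i) j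
  have key : ∀ i j : Fin k, i < j → X i j = 0 := by
    intro i j hij
    have := congrFun (congrArg Prod.fst (congrFun h j)) ⟨i.1, hij⟩
    exact this
  ext1
  ext1 i j
  change X i j = 0
  rcases lt_trichotomy i j with hij | rfl | hij
  · exact key i j hij
  · have h1 := congrArg Prod.snd (congrFun h i)
    have h2 : (X i i).imI = 0 := congrArg Prod.fst h1
    have h3 : (X i i).imJ = 0 := congrArg (fun p => p.2.1) h1
    have h4 : (X i i).imK = 0 := congrArg (fun p => p.2.2) h1
    have h5 : (X i i).re = 0 := by
      have := congrArg QuaternionAlgebra.re (hX' i i)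
      simp at this
      linarith
    ext <;> simp [h2, h3, h4, h5]
  · have := hX' i j
    rw [key j i hij, star_zero] at this
    exact neg_eq_zero.mp this.symm

/-- imaginary quaternion -/
noncomputable def mk4 (p : ℝ × ℝ × ℝ) : Quaternion ℝ := ⟨0, p.1, p.2.1, p.2.2⟩

@[simp] lemma mk4_re (p : ℝ × ℝ × ℝ) : (mk4 p).re = 0 := rfl
@[simp] lemma mk4_i (p : ℝ × ℝ × ℝ) : (mk4 p).imI = p.1 := rfl
@[simp] lemma mk4_j (p : ℝ × ℝ × ℝ) : (mk4 p).imJ = p.2.1 := rfl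
@[simp] lemma mk4_k (p : ℝ × ℝ × ℝ) : (mk4 p).imK = p.2.2 := rfl

lemma coords_surj (k : ℕ) : Function.Surjective (coords k) := by
  intro f
  refine ⟨⟨Matrix.of fun i j => if h : i < j then (f j).1 ⟨i.1, h⟩ else if h : j < i then
      -star ((f i).1 ⟨j.1, h⟩) else mk4 (f i).2, ?_⟩, ?_⟩
  · change Matrix.conjTranspose _ = - _
    ext1 i j
    rw [conjTranspose_apply, Matrix.neg_apply]
    rcases lt_trichotomy i j with hij | rfl | hij
    · simp [hij, hij.not_gt]
    · simp only [Matrix.of_apply, lt_irrefl, dite_false]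
      ext <;> simp
    · simp [hij, hij.not_gt]
  · funext j
    refine Prod.ext ?_ ?_
    · funext i
      have : Fin.castLE j.2.le i < j := i.2
      simp [coords, this]
    · simp [coords]

lemma finrank_sk (k : ℕ) : Module.finrank ℝ (sk k) = k * (2 * k + 1) := by
  rw [(LinearEquiv.ofBijective (coords k) ⟨coords_inj k, coords_surj k⟩).finrank_eq,
    Module.finrank_pi_fintype]
  simp only [Module.finrank_prod, Module.finrank_pi_fintype, Quaternion.finrank_eq_four,
    Module.finrank_self, Finset.sum_const, Finset.card_univ, Fintype.card_fin, smul_eq_mul]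
  rw [Fin.sum_univ_eq_sum_range (fun j => j * 4 + (1 + (1 + 1)))]
  induction k with
  | zero => simp
  | succ k ih => rw [Finset.sum_range_succ, ih]; ring

variable {m n : ℕ}

/-- infinitesimal action -/
noncomputable def L (A : Matrix (Fin m) (Fin n) (Quaternion ℝ)) :
    (sk m × sk n) →ₗ[ℝ] Matrix (Fin m) (Fin n) (Quaternion ℝ) where
  toFun p := p.1.1 * A - A * p.2.1
  map_add' := by intro p q; simp [Matrix.add_mul, Matrix.mul_add]; abel
  map_smul' := by intro c p; simp [smul_sub]

lemma span_tang (A : Matrix (Fin m) (Fin n) (Quaternion ℝ)) :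
    Submodule.span ℝ (tangSet2 A) = LinearMap.range (L A) := by
  have : tangSet2 A = (LinearMap.range (L A) : Set (Matrix (Fin m) (Fin n) (Quaternion ℝ))) := by
    ext B
    constructor
    · rintro ⟨X, Y, hX, hY, rfl⟩
      exact ⟨(⟨X, hX⟩, ⟨Y, hY⟩), rfl⟩
    · rintro ⟨⟨⟨X, hX⟩, ⟨Y, hY⟩⟩, rfl⟩
      exact ⟨X, Y, hX, hY, rfl⟩
  rw [this, Submodule.span_eq]

lemma span_stab (A : Matrix (Fin m) (Fin n) (Quaternion ℝ)) :
    Submodule.span ℝ (stabSet2 A) =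
      (LinearMap.ker (L A)).map ((sk m).subtype.prodMap (sk n).subtype) := by
  have : stabSet2 A = ((LinearMap.ker (L A)).map ((sk m).subtype.prodMap (sk n).subtype) :
      Set _) := by
    ext B
    constructor
    · rintro ⟨hX, hY, h⟩
      exact ⟨(⟨B.1, hX⟩, ⟨B.2, hY⟩), sub_eq_zero.mpr h, rfl⟩
    · rintro ⟨⟨⟨X, hX⟩, ⟨Y, hY⟩⟩, h, rfl⟩
      exact ⟨hX, hY, sub_eq_zero.mp h⟩
  rw [this, Submodule.span_eq]

lemma rank_null (A : Matrix (Fin m) (Fin n) (Quaternion ℝ)) :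
    Module.finrank ℝ (Submodule.span ℝ (tangSet2 A)) +
    Module.finrank ℝ (Submodule.span ℝ (stabSet2 A)) = m * (2 * m + 1) + n * (2 * n + 1) := by
  rw [span_tang, span_stab, ← (Submodule.equivMapOfInjective _ ?_ _).finrank_eq,
    LinearMap.finrank_range_add_finrank_ker, Module.finrank_prod, finrank_sk, finrank_sk]
  exact Function.Injective.prodMap (Submodule.subtype_injective _) (Submodule.subtype_injective _)

lemma re_trace_comm {p q : ℕ} (P : Matrix (Fin p) (Fin q) (Quaternion ℝ))
    (Q : Matrix (Fin q) (Fin p) (Quaternion ℝ)) :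
    (trace (P * Q)).re = (trace (Q * P)).re := by
  simp only [trace, diag, Matrix.mul_apply]
  have h : ∀ {r : ℕ} (f : Fin r → Quaternion ℝ), (∑ i, f i).re = ∑ i, (f i).re := fun f =>
    map_sum (QuaternionAlgebra.reₗ (R := ℝ) (-1) 0 (-1)) f Finset.univ
  simp only [h]
  rw [Finset.sum_comm]
  refine Finset.sum_congr rfl fun i _ => Finset.sum_congr rfl fun j _ => ?_
  simp
  ring

lemma re_trace_zero {p : ℕ} (H X : Matrix (Fin p) (Fin p) (Quaternion ℝ)) (hH : Hᴴ = H)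
    (hX : Xᴴ = -X) : (trace (H * X)).re = 0 := by
  have h1 : (trace ((H * X)ᴴ)).re = (trace (H * X)).re := by
    rw [trace_conjTranspose]; simp
  rw [conjTranspose_mul, hH, hX, Matrix.neg_mul, trace_neg] at h1
  have h2 := re_trace_comm H X
  simp at h1
  linarith

lemma eq_zero_of_trace (B : Matrix (Fin m) (Fin n) (Quaternion ℝ))
    (h0 : (trace (Bᴴ * B)).re = 0) : B = 0 := by
  simp only [trace, diag, Matrix.mul_apply] at h0
  have h : ∀ {r : ℕ} (f : Fin r → Quaternion ℝ), (∑ i, f i).re = ∑ i, (f i).re := fun f =>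
    map_sum (QuaternionAlgebra.reₗ (R := ℝ) (-1) 0 (-1)) f Finset.univ
  simp only [h, conjTranspose_apply, Quaternion.star_mul_self, Quaternion.re_coe] at h0
  rw [Finset.sum_eq_zero_iff_of_nonneg
    (fun i _ => Finset.sum_nonneg fun j _ => Quaternion.normSq_nonneg)] at h0
  ext1 i j
  have := h0 j (Finset.mem_univ _)
  rw [Finset.sum_eq_zero_iff_of_nonneg (fun i _ => Quaternion.normSq_nonneg)] at this
  exact Quaternion.normSq_eq_zero.mp (this i (Finset.mem_univ _))

/-- the normal space -/
noncomputable def nsp (A : Matrix (Fin m) (Fin n) (Quaternion ℝ)) :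
    Submodule ℝ (Matrix (Fin m) (Fin n) (Quaternion ℝ)) where
  carrier := {N | (A * Nᴴ)ᴴ = A * Nᴴ ∧ (Nᴴ * A)ᴴ = Nᴴ * A}
  zero_mem' := by simp
  add_mem' := by
    rintro a b ⟨h1, h2⟩ ⟨h3, h4⟩
    simp only [Set.mem_ofPred_eq, conjTranspose_add, Matrix.mul_add, Matrix.add_mul]
    exact ⟨by rw [h1, h3], by rw [h2, h4]⟩
  smul_mem' := by
    rintro c a ⟨h1, h2⟩
    simp only [Set.mem_ofPred_eq, ct_smul, Matrix.mul_smul, Matrix.smul_mul]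
    exact ⟨by rw [h1], by rw [h2]⟩

lemma disj (A : Matrix (Fin m) (Fin n) (Quaternion ℝ)) :
    Disjoint (LinearMap.range (L A)) (nsp A) := by
  rw [Submodule.disjoint_def]
  rintro B ⟨⟨⟨X, hX⟩, ⟨Y, hY⟩⟩, hB⟩ ⟨h1, h2⟩
  apply eq_zero_of_trace
  have hB' : B = X * A - A * Y := hB.symm
  have e : Bᴴ * B = (Bᴴ * X) * A - (Bᴴ * A) * Y := by
    rw [Matrix.mul_assoc, Matrix.mul_assoc, ← Matrix.mul_sub, ← hB']
  rw [e, trace_sub, Quaternion.re_sub, re_trace_zero _ _ h2 hY, re_trace_comm, ← Matrix.mul_assoc,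
    re_trace_zero _ _ h1 hX, sub_zero]

lemma finrank_mat : Module.finrank ℝ (Matrix (Fin m) (Fin n) (Quaternion ℝ)) = 4 * m * n := by
  rw [Module.finrank_matrix, Quaternion.finrank_eq_four]; simp; ring

/-- normal vectors -/
noncomputable def N (A : Matrix (Fin m) (Fin n) (Quaternion ℝ)) (j : ℕ) :
    Matrix (Fin m) (Fin n) (Quaternion ℝ) := A * (Aᴴ * A) ^ j

lemma N_mem (A : Matrix (Fin m) (Fin n) (Quaternion ℝ)) (j : ℕ) : N A j ∈ nsp A := by
  have h : ((Aᴴ * A) ^ j)ᴴ = (Aᴴ * A) ^ j := by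
    rw [conjTranspose_pow, conjTranspose_mul, conjTranspose_conjTranspose]
  constructor
  · simp only [N, conjTranspose_mul, h, conjTranspose_conjTranspose, Matrix.mul_assoc]
  · simp only [N, conjTranspose_mul, h, conjTranspose_conjTranspose]
    rw [Matrix.mul_assoc, ← pow_succ, ← Matrix.mul_assoc, ← pow_succ']

/-- diagonal real parts -/
noncomputable def dg (hmn : n ≤ m) : Matrix (Fin m) (Fin n) (Quaternion ℝ) →ₗ[ℝ] (Fin n → ℝ) where
  toFun B := fun i => (B (Fin.castLE hmn i) i).re
  map_add' := by intro p q; ext; simp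
  map_smul' := by intro c p; ext; simp

/-- test matrix -/
noncomputable def G (hmn : n ≤ m) (A : Matrix (Fin m) (Fin n) (Quaternion ℝ)) : Matrix (Fin n) (Fin n) ℝ :=
  fun j => dg hmn (N A j)

lemma good (hmn : n ≤ m) (A : Matrix (Fin m) (Fin n) (Quaternion ℝ)) (h : (G hmn A).det ≠ 0) :
    Module.finrank ℝ (LinearMap.range (L A)) + n ≤ 4 * m * n := by
  have li : LinearIndependent ℝ (fun j : Fin n => N A j) := by
    apply LinearIndependent.of_comp (dg hmn)
    exact Matrix.linearIndependent_rows_of_det_ne_zero h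
  have h1 : n ≤ Module.finrank ℝ (nsp A) := by
    have h2 := finrank_span_eq_card li
    have h3 : Submodule.span ℝ (Set.range (fun j : Fin n => N A j)) ≤ nsp A := by
      rw [Submodule.span_le]
      rintro _ ⟨j, rfl⟩
      exact N_mem A j
    have h4 := Submodule.finrank_mono h3
    rw [h2] at h4
    simpa using h4
  have h5 := Submodule.finrank_add_finrank_le_of_disjoint (disj A)
  rw [finrank_mat] at h5
  omega

/-- the generic point -/
noncomputable def A0 (m n : ℕ) : Matrix (Fin m) (Fin n) (Quaternion ℝ) :=
  fun i k => if i.1 = k.1 then (((k.1 : ℝ) + 1 : ℝ) : Quaternion ℝ) else 0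

lemma A0_gram (hmn : n ≤ m) : (A0 m n)ᴴ * A0 m n =
    diagonal (fun k : Fin n => ((((k.1 : ℝ) + 1)^2 : ℝ) : Quaternion ℝ)) := by
  ext1 i j
  rw [Matrix.mul_apply, Finset.sum_eq_single (Fin.castLE hmn i)]
  · by_cases h : i = j
    · subst h
      simp only [conjTranspose_apply, A0, Fin.val_castLE, if_true, diagonal_apply_eq,
        Quaternion.star_coe]
      rw [← Quaternion.coe_mul, sq]
    · have : i.1 ≠ j.1 := fun h' => h (Fin.ext h')
      simp [A0, this, diagonal_apply_ne _ h]
  · intro b _ hb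
    have : b.1 ≠ i.1 := fun h => hb (Fin.ext h)
    simp [A0, this]
  · simp

lemma A0_good (hmn : n ≤ m) : (G hmn (A0 m n)).det ≠ 0 := by
  have : G hmn (A0 m n) = (vandermonde (fun k : Fin n => ((k.1 : ℝ) + 1)^2))ᵀ *
      diagonal (fun k : Fin n => ((k.1 : ℝ) + 1)) := by
    ext j i
    rw [mul_diagonal, transpose_apply, vandermonde_apply]
    simp only [G, dg, LinearMap.coe_mk, AddHom.coe_mk, N, A0_gram hmn, diagonal_pow, mul_diagonal]
    simp only [A0, Fin.val_castLE, if_true, Pi.pow_apply]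
    rw [← Quaternion.coe_pow, ← Quaternion.coe_mul, Quaternion.re_coe, mul_comm]
  rw [this, det_mul, det_transpose, det_diagonal]
  refine mul_ne_zero ?_ ?_
  · rw [det_vandermonde_ne_zero_iff]
    intro a b hab
    have := (pow_left_inj₀ (by positivity) (by positivity) two_ne_zero).mp hab
    have h2 : (a.1 : ℝ) = b.1 := by linarith
    exact Fin.ext (by exact_mod_cast h2)
  · exact Finset.prod_ne_zero_iff.mpr fun i _ => by positivity

/-- segment to the generic point -/
noncomputable def At (A : Matrix (Fin m) (Fin n) (Quaternion ℝ)) (t : ℝ) :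
    Matrix (Fin m) (Fin n) (Quaternion ℝ) := A + t • (A0 m n - A)

lemma an_mul {p q r : ℕ} (P : ℝ → Matrix (Fin p) (Fin q) (Quaternion ℝ))
    (Q : ℝ → Matrix (Fin q) (Fin r) (Quaternion ℝ)) (t : ℝ)
    (hP : ∀ i j, AnalyticAt ℝ (fun s => P s i j) t)
    (hQ : ∀ i j, AnalyticAt ℝ (fun s => Q s i j) t) (i : Fin p) (j : Fin r) :
    AnalyticAt ℝ (fun s => (P s * Q s) i j) t := by
  simp only [Matrix.mul_apply]
  exact Finset.analyticAt_fun_sum _ fun k _ => (hP i k).mul (hQ k j)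

lemma an_pow {p : ℕ} (P : ℝ → Matrix (Fin p) (Fin p) (Quaternion ℝ)) (t : ℝ)
    (hP : ∀ i j, AnalyticAt ℝ (fun s => P s i j) t) (l : ℕ) (i : Fin p) (j : Fin p) :
    AnalyticAt ℝ (fun s => (P s ^ l) i j) t := by
  induction l generalizing i j with
  | zero => simp only [pow_zero]; exact analyticAt_const
  | succ l ih => simp only [pow_succ]; exact an_mul _ _ t ih hP i j

lemma an_At (A : Matrix (Fin m) (Fin n) (Quaternion ℝ)) (t : ℝ) (i : Fin m) (j : Fin n) :
    AnalyticAt ℝ (fun s => At A s i j) t := by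
  simp only [At, Matrix.add_apply, Matrix.smul_apply]
  exact analyticAt_const.add (analyticAt_id.smul analyticAt_const)

lemma an_star (A : Matrix (Fin m) (Fin n) (Quaternion ℝ)) (t : ℝ) (i : Fin n) (j : Fin m) :
    AnalyticAt ℝ (fun s => (At A s)ᴴ i j) t := by
  simp only [At, Matrix.add_apply, Matrix.smul_apply, conjTranspose_apply, star_add,
    Quaternion.star_smul]
  exact analyticAt_const.add (analyticAt_id.smul analyticAt_const)

/-- real part as a continuous linear map -/
noncomputable def reL : Quaternion ℝ →L[ℝ] ℝ :=
  ⟨QuaternionAlgebra.reₗ (R := ℝ) (-1) 0 (-1), Quaternion.continuous_re⟩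

lemma an_G (hmn : n ≤ m) (A : Matrix (Fin m) (Fin n) (Quaternion ℝ)) (t : ℝ) :
    AnalyticAt ℝ (fun s => (G hmn (At A s)).det) t := by
  simp only [det_apply]
  refine Finset.analyticAt_fun_sum _ fun σ _ => ?_
  simp only [Units.smul_def, zsmul_eq_mul]
  refine analyticAt_const.mul (Finset.analyticAt_fun_prod _ fun k _ => ?_)
  have h := an_mul (fun s => At A s) (fun s => ((At A s)ᴴ * At A s) ^ (σ k).1) t (an_At A t)
    (an_pow _ t (an_mul _ _ t (an_star A t) (an_At A t)) _) (Fin.castLE hmn k) k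
  exact (reL.analyticAt _).comp h

lemma freq (hmn : n ≤ m) (A : Matrix (Fin m) (Fin n) (Quaternion ℝ)) :
    ∃ᶠ t in nhds (0 : ℝ), (G hmn (At A t)).det ≠ 0 := by
  intro hc
  have h0 : (fun s => (G hmn (At A s)).det) =ᶠ[nhds 0] 0 := by
    filter_upwards [hc] with t ht
    simpa using ht
  have := AnalyticOnNhd.eqOn_zero_of_preconnected_of_eventuallyEq_zero
    (fun t _ => an_G hmn A t) isPreconnected_univ (Set.mem_univ 0) h0 (Set.mem_univ (1 : ℝ))
  apply A0_good hmn
  simpa [At] using this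

lemma cont_L (A : Matrix (Fin m) (Fin n) (Quaternion ℝ)) (p : sk m × sk n) :
    Continuous (fun t : ℝ => L (At A t) p) := by
  have : ∀ t, L (At A t) p = L A p + t • L (A0 m n - A) p := by
    intro t
    simp only [L, At, LinearMap.coe_mk, AddHom.coe_mk, Matrix.mul_add, Matrix.add_mul,
      Matrix.mul_smul, Matrix.smul_mul]
    rw [smul_sub]
    abel
  simp only [this]
  exact continuous_const.add (continuous_id.smul continuous_const)

lemma open_li {r : ℕ} (v : ℝ → Fin r → (Fin m → Fin n → Quaternion ℝ))
    (hv : ∀ i, Continuous fun t => v t i) (h : LinearIndependent ℝ (v 0)) :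
    ∀ᶠ t in nhds (0 : ℝ), LinearIndependent ℝ (v t) := by
  have h1 : Continuous v := continuous_pi hv
  exact h1.continuousAt.eventually (isOpen_setOfPred_linearIndependent.mem_nhds h)

lemma upper (hmn : n ≤ m) (A : Matrix (Fin m) (Fin n) (Quaternion ℝ)) :
    Module.finrank ℝ (LinearMap.range (L A)) + n ≤ 4 * m * n := by
  set r := Module.finrank ℝ (LinearMap.range (L A)) with hr
  let b := Module.finBasis ℝ (LinearMap.range (L A))
  have hb : ∀ i, ∃ p, L A p = (b i).1 := fun i => (b i).2
  choose x hx using hb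
  have hli : LinearIndependent ℝ (fun i => L (At A 0) (x i)) := by
    have : (fun i => L (At A 0) (x i)) = (LinearMap.range (L A)).subtype ∘ b := by
      funext i
      simp [At, hx]
    rw [this]
    exact b.linearIndependent.map' _ (Submodule.ker_subtype _)
  have hev := open_li (fun t i => L (At A t) (x i)) (fun i => cont_L A (x i)) hli
  obtain ⟨t, ht1, ht2⟩ := ((freq hmn A).and_eventually hev).exists
  have h1 := good hmn _ ht1
  have h2 : r ≤ Module.finrank ℝ (LinearMap.range (L (At A t))) := by
    have h3 := finrank_span_eq_card ht2
    have h4 : Submodule.span ℝ (Set.range (fun i => L (At A t) (x i))) ≤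
        LinearMap.range (L (At A t)) := by
      rw [Submodule.span_le]
      rintro _ ⟨j, rfl⟩
      exact ⟨_, rfl⟩
    have h5 := Submodule.finrank_mono h4
    have h6 : Module.finrank ℝ (Submodule.span ℝ (Set.range (fun i => L (At A t) (x i)))) = r := by
      exact h3.trans (Fintype.card_fin _)
    omega
  omega

lemma ker_le (hmn : n ≤ m) : LinearMap.ker (dg hmn) ≤ LinearMap.range (L (A0 m n)) := by
  intro B hB
  have hB' : ∀ k : Fin n, (B (Fin.castLE hmn k) k).re = 0 := fun k => congrFun hB k
  let d : ℕ → ℝ := fun i => (i : ℝ) + 1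
  have hd : ∀ i, d i ≠ 0 := fun i => by positivity
  have hw : ∀ i j : ℕ, i ≠ j → d j ^ 2 - d i ^ 2 ≠ 0 := by
    intro i j hij h
    have h1 : d j ^ 2 = d i ^ 2 := by linarith
    have h2 := (pow_left_inj₀ (by positivity) (by positivity) two_ne_zero).mp h1
    have h3 : (j : ℝ) = i := by simp only [d] at h2; linarith
    exact hij (by exact_mod_cast h3.symm)
  let b : Fin m → Fin m → Quaternion ℝ := fun i j => if h : j.1 < n then B i ⟨j.1, h⟩ else 0
  have hb0 : ∀ i j : Fin m, ¬ j.1 < n → b i j = 0 := fun i j h => by simp [b, h]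
  have hb1 : ∀ (i : Fin m) (j : Fin n), b i (Fin.castLE hmn j) = B i j := fun i j => by simp [b]
  have hbs : ∀ i, star (b i i) = - b i i := by
    intro i
    by_cases h : i.1 < n
    · have h1 : (b i i).re = 0 := by
        have := hB' ⟨i.1, h⟩
        simp only [b, h, dite_true]
        exact this
      ext <;> simp [h1]
    · simp [hb0 i i h]
  let X : Matrix (Fin m) (Fin m) (Quaternion ℝ) := Matrix.of fun i j =>
    if i = j then (d i)⁻¹ • b i j
    else if i.1 < n ∧ j.1 < n then
      (d j ^ 2 - d i ^ 2)⁻¹ • (d j • b i j + d i • star (b j i))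
    else (d j)⁻¹ • b i j - (d i)⁻¹ • star (b j i)
  let Y : Matrix (Fin n) (Fin n) (Quaternion ℝ) := Matrix.of fun i j =>
    if i = j then 0
    else (d j ^ 2 - d i ^ 2)⁻¹ •
      (d i • B (Fin.castLE hmn i) j + d j • star (B (Fin.castLE hmn j) i))
  have hflip : ∀ i j : ℕ, (d j ^ 2 - d i ^ 2)⁻¹ = -(d i ^ 2 - d j ^ 2)⁻¹ := by
    intro i j
    rw [← inv_neg, neg_sub]
  have hX : Xᴴ = -X := by
    ext1 i j
    rw [conjTranspose_apply, Matrix.neg_apply]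
    by_cases hij : i = j
    · subst hij
      simp only [X, Matrix.of_apply, if_true, Quaternion.star_smul, hbs, smul_neg]
    · by_cases h : i.1 < n ∧ j.1 < n
      · simp only [X, Matrix.of_apply, if_neg hij, if_neg (Ne.symm hij), if_pos h, if_pos h.symm,
          Quaternion.star_smul, star_add, star_star]
        rw [hflip j i]
        module
      · have h' : ¬ (j.1 < n ∧ i.1 < n) := fun h' => h h'.symm
        simp only [X, Matrix.of_apply, if_neg hij, if_neg (Ne.symm hij), if_neg h, if_neg h',
          Quaternion.star_smul, star_sub, star_star]
        module
  have hY : Yᴴ = -Y := by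
    ext1 i j
    rw [conjTranspose_apply, Matrix.neg_apply]
    by_cases hij : i = j
    · subst hij
      simp [Y]
    · simp only [Y, Matrix.of_apply, if_neg hij, if_neg (Ne.symm hij),
          Quaternion.star_smul, star_add, star_star]
      rw [hflip j i]
      module
  refine ⟨(⟨X, hX⟩, ⟨Y, hY⟩), ?_⟩
  change X * A0 m n - A0 m n * Y = B
  ext1 i k
  have e1 : (X * A0 m n) i k = d k • X i (Fin.castLE hmn k) := by
    rw [Matrix.mul_apply, Finset.sum_eq_single (Fin.castLE hmn k)]
    · simp only [A0, Fin.val_castLE, if_true]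
      rw [Quaternion.mul_coe_eq_smul]
    · intro c _ hc
      have : c.1 ≠ k.1 := fun h => hc (Fin.ext h)
      simp [A0, this]
    · simp
  rw [Matrix.sub_apply, e1]
  by_cases hi : i.1 < n
  · have e2 : (A0 m n * Y) i k = d i • Y ⟨i.1, hi⟩ k := by
      rw [Matrix.mul_apply, Finset.sum_eq_single ⟨i.1, hi⟩]
      · simp only [A0, if_true]
        rw [Quaternion.coe_mul_eq_smul]
      · intro c _ hc
        have : i.1 ≠ c.1 := fun h => hc (Fin.ext h.symm)
        simp [A0, this]
      · simp
    rw [e2]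
    by_cases hik : i = Fin.castLE hmn k
    · subst hik
      simp only [X, Y, Matrix.of_apply, if_true, Fin.val_castLE, hb1, smul_zero, sub_zero]
      rw [smul_smul, mul_inv_cancel₀ (hd _), one_smul]
    · have h1 : i.1 ≠ k.1 := fun h => hik (Fin.ext h)
      have h2 : (⟨i.1, hi⟩ : Fin n) ≠ k := fun h => h1 (congrArg Fin.val h)
      have h3 : i.1 < n ∧ k.1 < n := ⟨hi, k.2⟩
      have h4 : b (Fin.castLE hmn k) i = B (Fin.castLE hmn k) ⟨i.1, hi⟩ := by simp [b, hi]
      have h5 : Fin.castLE hmn ⟨i.1, hi⟩ = i := rfl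
      simp only [X, Y, Matrix.of_apply, if_neg hik, if_neg h2, if_pos h3, hb1, h4, h5,
        Fin.val_castLE]
      have hw' := hw i.1 k.1 h1
      generalize B i k = u
      generalize star (B (Fin.castLE hmn k) ⟨i.1, hi⟩) = v
      match_scalars
      · field_simp
      · ring
  · have e2 : (A0 m n * Y) i k = 0 := by
      rw [Matrix.mul_apply]
      refine Finset.sum_eq_zero fun c _ => ?_
      have : i.1 ≠ c.1 := fun h => hi (h ▸ c.2)
      simp [A0, this]
    have hik : i ≠ Fin.castLE hmn k := fun h => hi (h ▸ k.2)
    rw [e2, sub_zero]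
    simp only [X, Matrix.of_apply, if_neg hik, hi, false_and, if_false, hb1, hb0 _ i hi, star_zero,
      smul_zero, sub_zero, Fin.val_castLE]
    rw [smul_smul, mul_inv_cancel₀ (hd _), one_smul]

lemma lower (hmn : n ≤ m) : 4 * m * n ≤ Module.finrank ℝ (LinearMap.range (L (A0 m n))) + n := by
  have h1 := (dg (m := m) hmn).finrank_range_add_finrank_ker
  rw [finrank_mat] at h1
  have h2 := Submodule.finrank_mono (ker_le hmn)
  have h3 := Submodule.finrank_le (LinearMap.range (dg (m := m) hmn))
  simp at h3
  omega

end Sp2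

theorem stmt2 (m n : ℕ) (hn : 1 ≤ n) (hmn : n ≤ m) :
    IsLeast {d : ℕ | ∃ A : Matrix (Fin m) (Fin n) (Quaternion ℝ),
        d = Module.finrank ℝ (Submodule.span ℝ (stabSet2 A))}
      ((m - n) * (2 * (m - n) + 1) + 3 * n) ∧
    IsGreatest {d : ℕ | ∃ A : Matrix (Fin m) (Fin n) (Quaternion ℝ),
        d = Module.finrank ℝ (Submodule.span ℝ (tangSet2 A))}
      (4 * m * n - n) := by
  have key : (m - n) * (2 * (m - n) + 1) + 3 * n + 4 * m * n =
      m * (2 * m + 1) + n * (2 * n + 1) + n := by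
    obtain ⟨d, rfl⟩ := Nat.exists_eq_add_of_le hmn
    simp only [Nat.add_sub_cancel_left]
    ring
  have up : ∀ A : Matrix (Fin m) (Fin n) (Quaternion ℝ),
      Module.finrank ℝ (Submodule.span ℝ (tangSet2 A)) + n ≤ 4 * m * n := fun A => by
    rw [Sp2.span_tang]; exact Sp2.upper hmn A
  have lo := Sp2.lower hmn
  rw [← Sp2.span_tang] at lo
  have rn : ∀ A : Matrix (Fin m) (Fin n) (Quaternion ℝ), _ := fun A => Sp2.rank_null A
  refine ⟨⟨⟨Sp2.A0 m n, ?_⟩, ?_⟩, ⟨⟨Sp2.A0 m n, ?_⟩, ?_⟩⟩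
  · have := up (Sp2.A0 m n)
    have := rn (Sp2.A0 m n)
    omega
  · rintro _ ⟨A, rfl⟩
    have := up A
    have := rn A
    omega
  · have := up (Sp2.A0 m n)
    omega
  · rintro _ ⟨A, rfl⟩
    have := up A
    omega
end

section
/- Let m ≥ 3 and n ≥ 1 be integers. For B ∈ Matrix (Fin n) (Fin m) ℍ let S(B) = {(X,Y) ∈ 𝔰𝔬(m) × 𝔰𝔭(n) : Y·B = B·(X mapped entrywise into ℍ)}, regarded as a real vector space. Then the minimum over all B of dim_ℝ S(B) equals (m−4n)(m−4n−1)/2 if m > 4n+1, equals (n−m)(2(n−m)+1) if n > m, and equals 0 otherwise. (This is the infinitesimal version of: the identity component of a principal isotropy group of the action of SO(m)×Sp(n) on ℝᵐ ⊗_ℝ ℍⁿ, given by (g,u)·B = u B (gᵀ mapped into ℍ), is SO(m−4n) if m > 4n+1, is Sp(n−m) if n > m ≥ 3, and is trivial otherwise.) -/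
open Matrix Quaternion

/-- `S(B) = {(X,Y) ∈ 𝔰𝔬(m) × 𝔰𝔭(n) : Y·B = B·X}`, where the real skew-symmetric matrix `X`
is mapped entrywise into the quaternions. -/
def stabSet4 {m n : ℕ} (B : Matrix (Fin n) (Fin m) (Quaternion ℝ)) :
    Set (Matrix (Fin m) (Fin m) ℝ × Matrix (Fin n) (Fin n) (Quaternion ℝ)) :=
  {p | p.1ᵀ = -p.1 ∧ p.2ᴴ = -p.2 ∧ p.2 * B = B * p.1.map (algebraMap ℝ (Quaternion ℝ))}

namespace Stab4

/-- skew-adjoint elements of a real star module -/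
def sk (A : Type*) [AddCommGroup A] [StarAddMonoid A] [Module ℝ A] [StarModule ℝ A] :
    Submodule ℝ A where
  carrier := {x | star x = -x}
  add_mem' := by
    intro a b ha hb
    simp only [Set.mem_ofPred_eq] at *
    rw [star_add, ha, hb]; abel
  zero_mem' := by simp
  smul_mem' := by
    intro c x hx
    simp only [Set.mem_ofPred_eq] at *
    rw [StarModule.star_smul, hx]; simp

lemma mem_sk {A : Type*} [AddCommGroup A] [StarAddMonoid A] [Module ℝ A] [StarModule ℝ A] (x : A) :
    x ∈ sk A ↔ star x = -x := Iff.rfl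

/-- the skew matrices in coordinates -/
def skEquiv (k : ℕ) (A : Type*) [AddCommGroup A] [StarAddMonoid A] [Module ℝ A] [StarModule ℝ A] :
    sk (Matrix (Fin k) (Fin k) A) ≃ₗ[ℝ]
      (((j : Fin k) × Fin j.1) → A) × (Fin k → sk A) where
  toFun Z := (fun p => Z.1 ⟨p.2.1, p.2.2.trans p.1.2⟩ p.1,
    fun i => ⟨Z.1 i i, by
      have h := Z.2
      rw [mem_sk] at h
      exact congrFun (congrFun h i) i⟩)
  map_add' _ _ := rfl
  map_smul' _ _ := rfl
  invFun q := ⟨Matrix.of fun i j => if h : i.1 < j.1 then q.1 ⟨j, ⟨i.1, h⟩⟩ else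
      if h' : j.1 < i.1 then - star (q.1 ⟨i, ⟨j.1, h'⟩⟩) else q.2 i, by
    rw [mem_sk]
    ext i j
    rw [star_apply]
    rcases lt_trichotomy i j with h | h | h
    · have h1 : i.1 < j.1 := h
      have h2 : ¬ j.1 < i.1 := by omega
      simp [h, h.not_gt]
    · subst h
      have := (q.2 i).2
      rw [mem_sk] at this
      simp [this]
    · have h1 : j.1 < i.1 := h
      have h2 : ¬ i.1 < j.1 := by omega
      simp [h, h.not_gt]⟩
  left_inv Z := by
    have hZ := Z.2
    rw [mem_sk] at hZ
    ext i j
    rcases lt_trichotomy i j with h | h | h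
    · have h1 : i.1 < j.1 := h
      simp [h, h.not_ge]
    · subst h
      simp
    · have h1 : j.1 < i.1 := h
      have h2 : ¬ i.1 < j.1 := by omega
      have := congrFun (congrFun hZ i) j
      rw [star_apply] at this
      simp [h, h.le, h.not_ge, h.not_gt, this]
  right_inv q := by
    ext p
    · have hp : (⟨p.2.1, p.2.2.trans p.1.2⟩ : Fin k) < p.1 := p.2.2
      simp [hp, hp.not_ge]
    · simp

lemma finrank_sk (k : ℕ) (A : Type*) [AddCommGroup A] [StarAddMonoid A] [Module ℝ A]
    [StarModule ℝ A] [Module.Finite ℝ A] :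
    Module.finrank ℝ (sk (Matrix (Fin k) (Fin k) A)) =
      k * (k - 1) / 2 * Module.finrank ℝ A + k * Module.finrank ℝ (sk A) := by
  rw [(skEquiv k A).finrank_eq, Module.finrank_prod, Module.finrank_pi_fintype,
    Module.finrank_pi_fintype]
  simp only [Finset.sum_const, Finset.card_univ, Fintype.card_sigma, Fintype.card_fin, smul_eq_mul]
  rw [Fin.sum_univ_eq_sum_range (fun i => i), Finset.sum_range_id]

instance : StarModule ℝ ℍ[ℝ] := ⟨fun r a => by rw [Quaternion.star_smul, star_trivial r]⟩

lemma finrank_skR : Module.finrank ℝ (sk ℝ) = 0 := by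
  have : sk ℝ = ⊥ := by
    ext x
    rw [mem_sk, Submodule.mem_bot, star_trivial]
    constructor <;> intro h <;> linarith
  rw [this]; simp

/-- imaginary quaternions -/
def skH : sk ℍ[ℝ] ≃ₗ[ℝ] ℝ × ℝ × ℝ where
  toFun x := (x.1.imI, x.1.imJ, x.1.imK)
  map_add' _ _ := by simp
  map_smul' _ _ := by simp
  invFun q := ⟨(⟨0, q.1, q.2.1, q.2.2⟩ : ℍ[ℝ]), by
    exact Quaternion.star_eq_neg.2 rfl⟩
  left_inv x := by
    have h := x.2
    rw [mem_sk] at h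
    have h0 := congrArg (fun q : ℍ[ℝ] => q.re) h
    simp at h0
    have : x.1.re = 0 := by linarith
    ext <;> simp [this]
  right_inv q := by simp

lemma finrank_skH : Module.finrank ℝ (sk ℍ[ℝ]) = 3 := by
  rw [skH.finrank_eq]; simp

lemma dim_so (k : ℕ) : Module.finrank ℝ (sk (Matrix (Fin k) (Fin k) ℝ)) = k * (k - 1) / 2 := by
  rw [finrank_sk, finrank_skR]; simp

lemma dim_sp (k : ℕ) : Module.finrank ℝ (sk (Matrix (Fin k) (Fin k) ℍ[ℝ])) = k * (2 * k + 1) := by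
  rw [finrank_sk, finrank_skH, Quaternion.finrank_eq_four]
  rcases k with _ | k
  · simp
  · have := Nat.div_mul_cancel (Nat.even_mul_succ_self k).two_dvd
    simp only [Nat.add_sub_cancel, Nat.succ_eq_add_one] at *
    rw [mul_comm (k+1) k]
    nlinarith

lemma map_mul' {a b c : ℕ} (M : Matrix (Fin a) (Fin b) ℝ) (N : Matrix (Fin b) (Fin c) ℝ) :
    (M * N).map (algebraMap ℝ ℍ[ℝ]) = M.map (algebraMap ℝ ℍ[ℝ]) * N.map (algebraMap ℝ ℍ[ℝ]) :=
  Matrix.map_mul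

/-- stabilizer as a submodule -/
def S {m n : ℕ} (B : Matrix (Fin n) (Fin m) ℍ[ℝ]) :
    Submodule ℝ (Matrix (Fin m) (Fin m) ℝ × Matrix (Fin n) (Fin n) ℍ[ℝ]) where
  carrier := stabSet4 B
  add_mem' := by
    rintro a b ⟨h1, h2, h3⟩ ⟨k1, k2, k3⟩
    refine ⟨?_, ?_, ?_⟩
    · simp [h1, k1]; abel
    · simp [h2, k2]; abel
    · rw [Prod.snd_add, Prod.fst_add, Matrix.add_mul, h3, k3, ← Matrix.mul_add]
      congr 1
      ext1 i j
      simp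
  zero_mem' := by
    refine ⟨by simp, by simp, ?_⟩
    have : (0 : Matrix (Fin m) (Fin m) ℝ).map (algebraMap ℝ ℍ[ℝ]) = 0 := by
      ext1 i j; simp
    rw [Prod.snd_zero, Prod.fst_zero, this, Matrix.zero_mul, Matrix.mul_zero]
  smul_mem' := by
    rintro c a ⟨h1, h2, h3⟩
    refine ⟨?_, ?_, ?_⟩
    · simp [h1]
    · have := (sk (Matrix (Fin n) (Fin n) ℍ[ℝ])).smul_mem c (x := a.2) h2
      exact this
    · have : (c • a.1).map (algebraMap ℝ ℍ[ℝ]) = c • a.1.map (algebraMap ℝ ℍ[ℝ]) := by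
        ext1 i j
        rw [Matrix.smul_apply, Matrix.map_apply, Matrix.map_apply, Matrix.smul_apply, smul_eq_mul,
          map_mul, Algebra.smul_def]
      rw [Prod.smul_snd, Prod.smul_fst, this, Matrix.smul_mul, h3, Matrix.mul_smul]

lemma span_eq {m n : ℕ} (B : Matrix (Fin n) (Fin m) ℍ[ℝ]) :
    Submodule.span ℝ (stabSet4 B) = S B := Submodule.span_eq (S B)

lemma mem_S {m n : ℕ} (B : Matrix (Fin n) (Fin m) ℍ[ℝ]) (p) :
    p ∈ S B ↔ p.1ᵀ = -p.1 ∧ p.2ᴴ = -p.2 ∧ p.2 * B = B * p.1.map (algebraMap ℝ ℍ[ℝ]) := Iff.rfl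

lemma exists_ker {K : Type*} [DivisionRing K] {n : ℕ} {W : Type*} [AddCommGroup W] [Module K W]
    [Module.Finite K W] (w : ℕ) (hw : Module.finrank K W = w) (f : (Fin n → K) →ₗ[K] W) :
    ∃ (R : Matrix (Fin (n - w)) (Fin n) K)
      (L : Matrix (Fin n) (Fin (n - w)) K), (∀ i, f (R i) = 0) ∧ R * L = 1 := by
  have h1 := f.finrank_range_add_finrank_ker
  have h2 := Submodule.finrank_le (LinearMap.range f)
  rw [Module.finrank_fin_fun] at h1
  obtain ⟨v, hv⟩ := exists_linearIndependent_of_le_finrank (R := K) (M := LinearMap.ker f)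
    (n := n - w) (by omega)
  have hv' := hv.map' (LinearMap.ker f).subtype (Submodule.ker_subtype _)
  have hker : LinearMap.ker (Fintype.linearCombination K ((LinearMap.ker f).subtype ∘ v)) = ⊥ :=
    LinearMap.ker_eq_bot.2 (linearIndependent_iff_injective_fintypeLinearCombination.1 hv')
  obtain ⟨g, hg⟩ := LinearMap.exists_leftInverse_of_injective _ hker
  refine ⟨Matrix.of fun i => (v i).1, Matrix.of fun j => g (Pi.single j 1), fun i => (v i).2, ?_⟩
  ext i j
  have e1 : g (v i).1 = Pi.single i 1 := by
    have := LinearMap.congr_fun hg (Pi.single i 1)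
    simpa using this
  have e2 : g (v i).1 = ∑ j, (v i).1 j • g (Pi.single j 1) := by
    conv_lhs => rw [pi_eq_sum_univ' (v i).1]
    simp [map_sum]
  rw [Matrix.mul_apply]
  have := congrFun (e2.symm.trans e1) j
  rw [Finset.sum_apply] at this
  rw [Matrix.one_apply, Pi.single_apply] at *
  simp only [Pi.smul_apply, smul_eq_mul] at this
  refine Eq.trans this ?_
  simp [eq_comm]

lemma lower_so {m n : ℕ} (B : Matrix (Fin n) (Fin m) ℍ[ℝ]) :
    (m - 4 * n) * (m - 4 * n - 1) / 2 ≤ Module.finrank ℝ (S B) := by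
  let f : (Fin m → ℝ) →ₗ[ℝ] (Fin n → ℍ[ℝ]) :=
    { toFun := fun x a => ∑ i, B a i * algebraMap ℝ ℍ[ℝ] (x i)
      map_add' := by
        intro x y; ext1 a
        simp [mul_add, Finset.sum_add_distrib]
      map_smul' := by
        intro c x; ext1 a
        simp only [Pi.smul_apply, smul_eq_mul, map_mul, RingHom.id_apply, Finset.smul_sum]
        refine Finset.sum_congr rfl fun i _ => ?_
        rw [Algebra.smul_def, Algebra.left_comm] }
  have hW : Module.finrank ℝ (Fin n → ℍ[ℝ]) = 4 * n := by
    rw [Module.finrank_pi_fintype]; simp [Quaternion.finrank_eq_four, mul_comm]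
  obtain ⟨R, L, hR, hL⟩ := exists_ker _ hW f
  have hBR : B * Rᵀ.map (algebraMap ℝ ℍ[ℝ]) = 0 := by
    ext1 a i
    exact congrFun (hR i) a
  have hL' : Lᵀ * Rᵀ = 1 := by rw [← Matrix.transpose_mul, hL, Matrix.transpose_one]
  let F : sk (Matrix (Fin (m - 4 * n)) (Fin (m - 4 * n)) ℝ) →ₗ[ℝ] S B :=
    { toFun := fun Z => ⟨(Rᵀ * Z.1 * R, 0), by
        have hZ : Z.1ᵀ = - Z.1 := Z.2
        refine ⟨?_, by simp, ?_⟩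
        · simp [Matrix.transpose_mul, hZ, Matrix.mul_assoc]
        · simp only [map_mul', ← Matrix.mul_assoc, hBR, Matrix.zero_mul]⟩
      map_add' := by
        intro x y
        ext1
        simp [Matrix.mul_add, Matrix.add_mul]
      map_smul' := by
        intro c x
        ext1
        simp }
  rw [← dim_so]
  refine LinearMap.finrank_le_finrank_of_injective (f := F) ?_
  rw [← LinearMap.ker_eq_bot, LinearMap.ker_eq_bot']
  intro Z hZ
  have h1 : Rᵀ * Z.1 * R = 0 := congrArg (fun p => p.1.1) hZ
  have h2 : Lᵀ * (Rᵀ * Z.1 * R) * L = Z.1 := by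
    have : Lᵀ * (Rᵀ * Z.1 * R) * L = (Lᵀ * Rᵀ) * Z.1 * (R * L) := by
      simp only [Matrix.mul_assoc]
    rw [this, hL, hL']; simp
  rw [h1] at h2
  ext1
  rw [← h2]; simp

lemma lower_sp {m n : ℕ} (B : Matrix (Fin n) (Fin m) ℍ[ℝ]) :
    (n - m) * (2 * (n - m) + 1) ≤ Module.finrank ℝ (S B) := by
  let f : (Fin n → ℍ[ℝ]) →ₗ[ℍ[ℝ]] (Fin m → ℍ[ℝ]) :=
    { toFun := fun x i => ∑ a, x a * B a i
      map_add' := by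
        intro x y; ext1 a
        simp [add_mul, Finset.sum_add_distrib]
      map_smul' := by
        intro c x; ext1 a
        simp [Finset.mul_sum, mul_assoc] }
  have hW : Module.finrank ℍ[ℝ] (Fin m → ℍ[ℝ]) = m := by simp
  obtain ⟨R, L, hR, hL⟩ := exists_ker _ hW f
  have hRB : R * B = 0 := by
    ext1 a i
    exact congrFun (hR a) i
  have hL' : Lᴴ * Rᴴ = 1 := by rw [← Matrix.conjTranspose_mul, hL, Matrix.conjTranspose_one]
  have hmap0 : (0 : Matrix (Fin m) (Fin m) ℝ).map (algebraMap ℝ ℍ[ℝ]) = 0 := by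
    ext1 i j; simp
  let F : sk (Matrix (Fin (n - m)) (Fin (n - m)) ℍ[ℝ]) →ₗ[ℝ] S B :=
    { toFun := fun Z => ⟨(0, Rᴴ * Z.1 * R), by
        have hZ : Z.1ᴴ = - Z.1 := Z.2
        refine ⟨by simp, ?_, ?_⟩
        · simp [Matrix.conjTranspose_mul, hZ, Matrix.mul_assoc]
        · simp only [Matrix.mul_assoc, hRB, Matrix.mul_zero, hmap0]⟩
      map_add' := by
        intro x y
        ext1
        simp [Matrix.mul_add, Matrix.add_mul]
      map_smul' := by
        intro c x
        ext1
        simp }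
  rw [← dim_sp]
  refine LinearMap.finrank_le_finrank_of_injective (f := F) ?_
  rw [← LinearMap.ker_eq_bot, LinearMap.ker_eq_bot']
  intro Z hZ
  have h1 : Rᴴ * Z.1 * R = 0 := congrArg (fun p => p.1.2) hZ
  have h2 : Lᴴ * (Rᴴ * Z.1 * R) * L = Z.1 := by
    have : Lᴴ * (Rᴴ * Z.1 * R) * L = (Lᴴ * Rᴴ) * Z.1 * (R * L) := by
      simp only [Matrix.mul_assoc]
    rw [this, hL, hL']; simp
  rw [h1] at h2
  ext1
  rw [← h2]; simp

/-- the units 1, i, j, k -/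
noncomputable def e (c : ℕ) : ℍ[ℝ] :=
  ⟨if c = 0 then 1 else 0, if c = 1 then 1 else 0, if c = 2 then 1 else 0, if c = 3 then 1 else 0⟩

lemma e_zero : e 0 = 1 := by ext <;> simp [e]

lemma e_re (c d : ℕ) (hc : c < 4) : (star (e c) * e d).re = if c = d then 1 else 0 := by
  have e0 : ∀ c, (e c).re = if c = 0 then 1 else 0 := fun _ => rfl
  have e1 : ∀ c, (e c).imI = if c = 1 then 1 else 0 := fun _ => rfl
  have e2 : ∀ c, (e c).imJ = if c = 2 then 1 else 0 := fun _ => rfl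
  have e3 : ∀ c, (e c).imK = if c = 3 then 1 else 0 := fun _ => rfl
  simp only [e0, e1, e2, e3, Quaternion.re_mul, Quaternion.re_star, Quaternion.imI_star,
    Quaternion.imJ_star, Quaternion.imK_star]
  by_cases h : c = d
  · subst h
    interval_cases c <;> simp
  · have h' : ¬ d = c := fun hh => h hh.symm
    interval_cases c <;> simp [h, h']

/-- norms of the columns -/
noncomputable def dd (n j : ℕ) : ℝ := if j < 4 * n then (j : ℝ) + 1 else 0

/-- the generic point -/
noncomputable def B0 (m n : ℕ) : Matrix (Fin n) (Fin m) ℍ[ℝ] :=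
  Matrix.of fun a j => if j.1 % n = a.1 then dd n j.1 • e (j.1 / n) else 0

lemma gram (m n : ℕ) (hn : 1 ≤ n) (i j : Fin m) :
    (((B0 m n)ᴴ * B0 m n) i j).re = if i = j then dd n i * dd n i else 0 := by
  rw [Matrix.mul_apply]
  have h : ∀ a : Fin n, (B0 m n)ᴴ i a * B0 m n a j =
      if a = ⟨i.1 % n, Nat.mod_lt _ hn⟩ then
        (if j.1 % n = i.1 % n then (dd n i * dd n j) • (star (e (i.1 / n)) * e (j.1 / n)) else 0)
      else 0 := by
    intro a
    rw [Matrix.conjTranspose_apply]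
    simp only [B0, Matrix.of_apply, Fin.ext_iff]
    by_cases h1 : i.1 % n = a.1
    · by_cases h2 : j.1 % n = a.1
      · simp [h1, h2, Quaternion.star_smul, smul_smul, mul_comm]
      · simp [h1, h2]
    · have : ¬ a.1 = i.1 % n := fun h => h1 h.symm
      simp [h1, this]
  simp only [h, Finset.sum_ite_eq', Finset.mem_univ, if_true]
  by_cases hi : i.1 < 4 * n
  · have h4 : i.1 / n < 4 := (Nat.div_lt_iff_lt_mul hn).2 hi
    by_cases hij : i = j
    · subst hij
      simp only [if_true, Quaternion.re_smul, e_re _ _ h4, smul_eq_mul, mul_one]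
    · rw [if_neg hij]
      split_ifs with hmod
      · rw [Quaternion.re_smul, e_re _ _ h4, if_neg, smul_zero]
        intro hdiv
        apply hij
        ext
        rw [← Nat.div_add_mod i.1 n, ← Nat.div_add_mod j.1 n, hmod, hdiv]
      · simp
  · have : dd n i = 0 := by simp [dd, hi]
    simp [this]

lemma key (m n : ℕ) (hn : 1 ≤ n) (p) (hp : p ∈ S (B0 m n)) :
    (∀ i j, (i.1 < 4 * n ∨ j.1 < 4 * n) → p.1 i j = 0) ∧
    (∀ a b, (a.1 < m ∨ b.1 < m) → p.2 a b = 0) := by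
  obtain ⟨X, Y⟩ := p
  obtain ⟨hX, hY, h⟩ := hp
  simp only at hX hY h ⊢
  have hXs : ∀ i j, X j i = - X i j := fun i j => congrFun (congrFun hX i) j
  have hYs : ∀ i j, star (Y j i) = - Y i j := fun i j => congrFun (congrFun hY i) j
  set B := B0 m n with hB
  set X' := X.map (algebraMap ℝ ℍ[ℝ]) with hX'
  have hX'H : X'ᴴ = - X' := by
    ext1 i j
    rw [Matrix.conjTranspose_apply, Matrix.neg_apply, hX', Matrix.map_apply, Matrix.map_apply,
      hXs i j]
    simp
  have h1 : Bᴴ * Y = X' * Bᴴ := by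
    have := congrArg Matrix.conjTranspose h
    rw [Matrix.conjTranspose_mul, Matrix.conjTranspose_mul, hY, hX'H] at this
    simpa using this
  have h2 : X' * (Bᴴ * B) = (Bᴴ * B) * X' := by
    rw [← Matrix.mul_assoc, ← h1, Matrix.mul_assoc, h, Matrix.mul_assoc]
  have h3 : ∀ i j, X i j * (dd n j * dd n j) = dd n i * dd n i * X i j := by
    intro i j
    have h4 := congrArg (fun M : Matrix (Fin m) (Fin m) ℍ[ℝ] => (M i j).re) h2
    simp only [Matrix.mul_apply (M := X'), Matrix.mul_apply (N := X')] at h4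
    have re_sum : ∀ g : Fin m → ℍ[ℝ], (∑ i, g i).re = ∑ i, (g i).re := fun g =>
      map_sum (AddMonoidHom.mk' (fun q : ℍ[ℝ] => q.re) (fun _ _ => rfl)) g _
    rw [re_sum, re_sum] at h4
    have a1 : ∀ k, (X' i k * (Bᴴ * B) k j).re = X i k * ((Bᴴ * B) k j).re := by
      intro k
      rw [hX', Matrix.map_apply, ← Algebra.smul_def, Quaternion.re_smul, smul_eq_mul]
    have a2 : ∀ k, ((Bᴴ * B) i k * X' k j).re = ((Bᴴ * B) i k).re * X k j := by
      intro k
      rw [hX', Matrix.map_apply, ← Algebra.commutes, ← Algebra.smul_def, Quaternion.re_smul,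
        smul_eq_mul, mul_comm]
    simp only [a1, a2] at h4
    simp only [hB, gram m n hn] at h4
    simpa using h4
  have h5 : ∀ i j : Fin m, (i.1 < 4 * n ∨ j.1 < 4 * n) → X i j = 0 := by
    intro i j hij
    by_cases hne : i = j
    · subst hne
      have := hXs i i
      linarith
    · have hne' : dd n j * dd n j - dd n i * dd n i ≠ 0 := by
        have hv : (i.1 : ℝ) ≠ j.1 := by
          intro hh; exact hne (Fin.ext (by exact_mod_cast hh))
        have p1 : (0 : ℝ) ≤ i.1 := Nat.cast_nonneg _
        have p2 : (0 : ℝ) ≤ j.1 := Nat.cast_nonneg _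
        have : dd n j * dd n j - dd n i * dd n i = (dd n j - dd n i) * (dd n j + dd n i) := by ring
        rw [this]
        unfold dd
        apply mul_ne_zero
        · split_ifs with c1 c2 c2
          · intro hh; apply hv; linarith
          · intro hh; linarith
          · intro hh; linarith
          · omega
        · split_ifs with c1 c2 c2
          · intro hh; linarith
          · intro hh; linarith
          · intro hh; linarith
          · omega
      have := h3 i j
      have : X i j * (dd n j * dd n j - dd n i * dd n i) = 0 := by linarith
      exact (mul_eq_zero.1 this).resolve_right hne'
  have h6 : Y * B = 0 := by
    rw [h]
    ext1 a j
    rw [Matrix.mul_apply, Matrix.zero_apply]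
    refine Finset.sum_eq_zero fun i _ => ?_
    by_cases hi : i.1 < 4 * n
    · rw [hX', Matrix.map_apply, h5 i j (Or.inl hi)]; simp
    · have : B a i = 0 := by simp [hB, B0, dd, hi]
      rw [this, zero_mul]
  have h7 : ∀ a b : Fin n, b.1 < m → Y a b = 0 := by
    intro a b hb
    have h8 := congrFun (congrFun h6 a) ⟨b.1, hb⟩
    have hbn := b.2
    rw [Matrix.mul_apply, Finset.sum_eq_single b] at h8
    · have hd : dd n b.1 ≠ 0 := by
        unfold dd
        rw [if_pos (by omega)]
        positivity
      simp only [hB, B0, Matrix.of_apply, Nat.mod_eq_of_lt hbn, Nat.div_eq_of_lt hbn, e_zero,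
        if_true, Matrix.zero_apply, mul_smul_comm, mul_one] at h8
      exact (smul_eq_zero.1 h8).resolve_left hd
    · intro c _ hc
      have : ¬ b.1 = c.1 := fun hh => hc (Fin.ext hh.symm)
      simp [hB, B0, Nat.mod_eq_of_lt hbn, this]
    · simp
  refine ⟨h5, ?_⟩
  rintro a b (ha | hb)
  · have := hYs a b
    rw [h7 b a ha] at this
    simpa using this.symm
  · exact h7 a b hb

lemma upper (m n : ℕ) (hn : 1 ≤ n) : Module.finrank ℝ (S (B0 m n)) ≤
    (m - 4 * n) * (m - 4 * n - 1) / 2 + (n - m) * (2 * (n - m) + 1) := by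
  rw [← dim_so, ← dim_sp, ← Module.finrank_prod]
  let u : Fin (m - 4 * n) → Fin m := fun i => ⟨i.1 + 4 * n, by omega⟩
  let v : Fin (n - m) → Fin n := fun i => ⟨i.1 + m, by omega⟩
  let F : S (B0 m n) →ₗ[ℝ] sk (Matrix (Fin (m - 4 * n)) (Fin (m - 4 * n)) ℝ) ×
      sk (Matrix (Fin (n - m)) (Fin (n - m)) ℍ[ℝ]) :=
    { toFun := fun p => (⟨p.1.1.submatrix u u, by
          have := p.2.1
          ext i j
          exact congrFun (congrFun this (u i)) (u j)⟩, ⟨p.1.2.submatrix v v, by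
          have := p.2.2.1
          ext1 i j
          exact congrFun (congrFun this (v i)) (v j)⟩)
      map_add' := fun _ _ => rfl
      map_smul' := fun _ _ => rfl }
  refine LinearMap.finrank_le_finrank_of_injective (f := F) ?_
  rw [← LinearMap.ker_eq_bot, LinearMap.ker_eq_bot']
  intro p hp
  obtain ⟨k1, k2⟩ := key m n hn p.1 p.2
  have q1 : p.1.1.submatrix u u = 0 := congrArg (fun q => q.1.1) hp
  have q2 : p.1.2.submatrix v v = 0 := congrArg (fun q => q.2.1) hp
  apply Subtype.ext
  apply Prod.ext
  · ext1 i j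
    by_cases hij : i.1 < 4 * n ∨ j.1 < 4 * n
    · exact k1 i j hij
    · have := congrFun (congrFun q1 ⟨i.1 - 4 * n, by omega⟩) ⟨j.1 - 4 * n, by omega⟩
      have ei : u ⟨i.1 - 4 * n, by omega⟩ = i := Fin.ext (by simp only [u]; omega)
      have ej : u ⟨j.1 - 4 * n, by omega⟩ = j := Fin.ext (by simp only [u]; omega)
      rw [Matrix.submatrix_apply, ei, ej] at this
      exact this
  · ext1 i j
    by_cases hij : i.1 < m ∨ j.1 < m
    · exact k2 i j hij
    · have := congrFun (congrFun q2 ⟨i.1 - m, by omega⟩) ⟨j.1 - m, by omega⟩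
      have ei : v ⟨i.1 - m, by omega⟩ = i := Fin.ext (by simp only [v]; omega)
      have ej : v ⟨j.1 - m, by omega⟩ = j := Fin.ext (by simp only [v]; omega)
      rw [Matrix.submatrix_apply, ei, ej] at this
      exact this

end Stab4

theorem stmt4 (m n : ℕ) (hm : 3 ≤ m) (hn : 1 ≤ n) :
    IsLeast {d : ℕ | ∃ B : Matrix (Fin n) (Fin m) (Quaternion ℝ),
        d = Module.finrank ℝ (Submodule.span ℝ (stabSet4 B))}
      (if 4 * n + 1 < m then (m - 4 * n) * (m - 4 * n - 1) / 2
       else if m < n then (n - m) * (2 * (n - m) + 1) else 0) := by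
  have hlow : ∀ B : Matrix (Fin n) (Fin m) (Quaternion ℝ),
      (if 4 * n + 1 < m then (m - 4 * n) * (m - 4 * n - 1) / 2
       else if m < n then (n - m) * (2 * (n - m) + 1) else 0) ≤ Module.finrank ℝ (Stab4.S B) := by
    intro B
    split_ifs
    · exact Stab4.lower_so B
    · exact Stab4.lower_sp B
    · exact Nat.zero_le _
  constructor
  · refine ⟨Stab4.B0 m n, ?_⟩
    rw [Stab4.span_eq]
    refine le_antisymm (hlow _) ((Stab4.upper m n hn).trans ?_)
    split_ifs with h1 h2
    · have : n - m = 0 := by omega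
      simp [this]
    · have : m - 4 * n = 0 := by omega
      simp [this]
    · have a1 : n - m = 0 := by omega
      have a2 : m - 4 * n - 1 = 0 := by omega
      simp [a1, a2]
  · rintro d ⟨B, rfl⟩
    rw [Stab4.span_eq]
    exact hlow B
end

section
/- Let m ≥ 2 and n ≥ 1 be integers. Consider the action of SO(m)×Sp(1)×Sp(n) on Matrix (Fin n) (Fin m) ℍ given by (g,q,u)·B = u · B′ · (gᵀ mapped entrywise into ℍ), where B′ is B with every entry multiplied on the right by the conjugate of the unit quaternion q. For B ∈ Matrix (Fin n) (Fin m) ℍ let S(B) = {(X,s,Y) ∈ 𝔰𝔬(m) × Im(ℍ) × 𝔰𝔭(n) : Y·B − B·(X mapped into ℍ) = B·ᵣs}, where B·ᵣs denotes entrywise right multiplication of B by s. Then: if m ≥ 3, the minimum over all B of dim_ℝ S(B) equals (m−4n)(m−4n−1)/2 if m > 4n+1, equals (n−m)(2(n−m)+1) if n > m, and equals 0 otherwise; if m = 2 and n ≥ 2, the minimum equals 1 + (n−2)(2(n−2)+1). (Infinitesimally, the identity component of a principal isotropy group of (SO(m)×Sp(1)Sp(n), ℝᵐ ⊗_ℝ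 ℝ⁴ⁿ) is SO(m−4n) if m > 4n+1, Sp(n−m) if n > m ≥ 3, trivial otherwise for m ≥ 3, and is U(1)×Sp(n−2) when m = 2, n ≥ 2.) -/
open Matrix Quaternion

/-- `S(B) = {(X,s,Y) ∈ 𝔰𝔬(m) × Im(ℍ) × 𝔰𝔭(n) : Y·B − B·X = B·ᵣs}`, where the real
skew-symmetric matrix `X` is mapped entrywise into the quaternions and `B·ᵣs` denotes
entrywise right multiplication by the purely imaginary quaternion `s`. -/
def stabSet5 {m n : ℕ} (B : Matrix (Fin n) (Fin m) (Quaternion ℝ)) :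
    Set (Matrix (Fin m) (Fin m) ℝ × Quaternion ℝ × Matrix (Fin n) (Fin n) (Quaternion ℝ)) :=
  {p | p.1ᵀ = -p.1 ∧ p.2.1.re = 0 ∧ p.2.2ᴴ = -p.2.2 ∧
    p.2.2 * B - B * p.1.map (algebraMap ℝ (Quaternion ℝ)) = B.map (fun q => q * p.2.1)}

instance starModQ5 : StarModule ℝ (Quaternion ℝ) := ⟨fun a x => by
  simp⟩

/-- The skew-Hermitian matrices as a real subspace. -/
def skw (A : Type) [Ring A] [StarRing A] [Algebra ℝ A] [StarModule ℝ A] (k : ℕ) :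
    Submodule ℝ (Matrix (Fin k) (Fin k) A) where
  carrier := {M | Mᴴ = -M}
  add_mem' := by
    intro a b ha hb
    simp only [Set.mem_ofPred_eq] at *
    rw [conjTranspose_add, ha, hb]; abel
  zero_mem' := by simp
  smul_mem' := by
    intro c x hx
    simp only [Set.mem_ofPred_eq] at *
    rw [conjTranspose_smul, hx]; simp

def skew0 (A : Type) [Ring A] [StarRing A] [Algebra ℝ A] [StarModule ℝ A] :
    Submodule ℝ A where
  carrier := {x | star x = -x}
  add_mem' := by
    intro a b ha hb
    simp only [Set.mem_ofPred_eq] at *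
    rw [star_add, ha, hb]; abel
  zero_mem' := by simp
  smul_mem' := by
    intro c x hx
    simp only [Set.mem_ofPred_eq] at *
    rw [StarModule.star_smul, hx]; simp

lemma skw_apply {A : Type} [Ring A] [StarRing A] [Algebra ℝ A] [StarModule ℝ A] {k : ℕ}
    {M : Matrix (Fin k) (Fin k) A} (h : Mᴴ = -M) (i j : Fin k) : star (M i j) = - M j i := by
  have := congrFun (congrFun h j) i
  simpa using this

/-- Parametrisation of skew-Hermitian matrices. -/
def skwEquiv (A : Type) [Ring A] [StarRing A] [Algebra ℝ A] [StarModule ℝ A] (k : ℕ) :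
    skw A k ≃ₗ[ℝ] (Fin k → skew0 A) × ((Σ i : Fin k, Fin i.val) → A) where
  toFun M := (fun i => ⟨M.1 i i, skw_apply M.2 i i⟩,
    fun p => M.1 p.1 ⟨p.2.1, p.2.2.trans p.1.2⟩)
  map_add' := by
    intro x y; rfl
  map_smul' := by
    intro x y; rfl
  invFun q := ⟨Matrix.of fun i j => if h : j.val < i.val then q.2 ⟨i, ⟨j.val, h⟩⟩ else
      if h : i.val < j.val then - star (q.2 ⟨j, ⟨i.val, h⟩⟩) else (q.1 i).1, by
    change _ = _
    ext i j
    simp only [conjTranspose_apply, Matrix.neg_apply, Matrix.of_apply]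
    rcases lt_trichotomy i.val j.val with h | h | h
    · simp [h, h.not_gt]
    · obtain rfl : i = j := Fin.ext h
      have h0 : star (q.1 i).1 = -(q.1 i).1 := (q.1 i).2
      simp [h0]
    · simp [h, h.not_gt]⟩
  left_inv := by
    intro M
    ext i j
    rcases lt_trichotomy i.val j.val with h | h | h
    · have := skw_apply M.2 j i
      simp only [Matrix.of_apply, dif_neg h.not_gt, dif_pos h, this, neg_neg]
    · obtain rfl : i = j := Fin.ext h
      simp
    · simp only [Matrix.of_apply, dif_pos h]
  right_inv := by
    rintro ⟨f, g⟩
    ext p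
    · simp
    · simp only [Matrix.of_apply, dif_pos p.2.2]

lemma finrank_skw (A : Type) [Ring A] [StarRing A] [Algebra ℝ A] [StarModule ℝ A]
    [Module.Finite ℝ A] (k : ℕ) :
    Module.finrank ℝ (skw A k) =
      k * Module.finrank ℝ (skew0 A) + (k * (k-1) / 2) * Module.finrank ℝ A := by
  rw [(skwEquiv A k).finrank_eq, Module.finrank_prod, Module.finrank_pi_fintype,
    Module.finrank_pi_fintype]
  simp only [Finset.sum_const, Finset.card_univ, Fintype.card_fin, Fintype.card_sigma, smul_eq_mul]
  rw [Fin.sum_univ_eq_sum_range (fun i => i), Finset.sum_range_id]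

lemma finrank_so (k : ℕ) : Module.finrank ℝ (skw ℝ k) = k * (k-1) / 2 := by
  have : skew0 ℝ = ⊥ := by
    rw [eq_bot_iff]
    intro x hx
    have : star x = -x := hx
    simp at this
    simp; linarith
  rw [finrank_skw, this]
  simp

lemma finrank_sp (k : ℕ) : Module.finrank ℝ (skw (Quaternion ℝ) k) = k * (2 * k + 1) := by
  have h3 : Module.finrank ℝ (skew0 (Quaternion ℝ)) = 3 := by
    let r : Quaternion ℝ →ₗ[ℝ] ℝ := ⟨⟨fun q => q.re, by simp⟩, by simp⟩
    have hk : LinearMap.ker r = skew0 (Quaternion ℝ) := by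
      ext x
      rw [LinearMap.mem_ker]
      change x.re = 0 ↔ star x = -x
      exact Quaternion.star_eq_neg.symm
    have hs : LinearMap.range r = ⊤ := by
      rw [LinearMap.range_eq_top]
      intro x; exact ⟨(x : Quaternion ℝ), rfl⟩
    have := LinearMap.finrank_range_add_finrank_ker r
    rw [hk, hs, Quaternion.finrank_eq_four] at this
    simp at this; omega
  rw [finrank_skw, h3, Quaternion.finrank_eq_four]
  obtain _ | k := k
  · simp
  · have h2 : 2 ∣ (k+1) * (k + 1 - 1) := by
      simpa [mul_comm] using (Nat.even_mul_succ_self k).two_dvd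
    obtain ⟨c, hc⟩ := h2
    rw [hc, Nat.mul_div_cancel_left _ (by norm_num)]
    simp at hc
    nlinarith

/-- The stabilizer as a subspace. -/
def stabSub {m n : ℕ} (B : Matrix (Fin n) (Fin m) (Quaternion ℝ)) : Submodule ℝ
    (Matrix (Fin m) (Fin m) ℝ × Quaternion ℝ × Matrix (Fin n) (Fin n) (Quaternion ℝ)) where
  carrier := stabSet5 B
  add_mem' := by
    rintro ⟨X, s, Y⟩ ⟨X', s', Y'⟩ ⟨h1, h2, h3, h4⟩ ⟨h1', h2', h3', h4'⟩
    simp only at h1 h2 h3 h4 h1' h2' h3' h4'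
    refine ⟨?_, ?_, ?_, ?_⟩
    · simp [h1, h1']; abel
    · simp [h2, h2']
    · simp [h3, h3']; abel
    · have : (B.map fun q => q * (s + s')) = (B.map fun q => q * s) + (B.map fun q => q * s') := by
        ext1 i j; simp [mul_add]
      simp only [Prod.mk_add_mk, this, ← h4, ← h4']
      rw [Matrix.map_add _ (by simp)]
      simp only [Matrix.add_mul, Matrix.mul_add]; abel
  zero_mem' := by
    refine ⟨?_, ?_, ?_, ?_⟩ <;> simp
    ext1 i j; simp [Matrix.mul_apply]
  smul_mem' := by
    rintro c ⟨X, s, Y⟩ ⟨h1, h2, h3, h4⟩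
    simp only at h1 h2 h3 h4
    refine ⟨?_, ?_, ?_, ?_⟩
    · simp [h1]
    · simp [h2]
    · simp [h3]
    · have : (B.map fun q => q * (c • s)) = c • (B.map fun q => q * s) := by
        ext1 i j; simp
      have h5 : (c • X).map (algebraMap ℝ (Quaternion ℝ)) = c • X.map (algebraMap ℝ (Quaternion ℝ)) := by
        ext1 i j; rw [Matrix.map_apply, Matrix.smul_apply, Matrix.smul_apply, Matrix.map_apply, smul_eq_mul, map_mul, Algebra.smul_def]
      simp only [Prod.smul_mk, this, ← h4, h5]
      rw [Matrix.smul_mul, Matrix.mul_smul, smul_sub]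

lemma span_stab_s5 {m n : ℕ} (B : Matrix (Fin n) (Fin m) (Quaternion ℝ)) :
    Submodule.span ℝ (stabSet5 B) = stabSub B := Submodule.span_eq (stabSub B)

/-- left kernel -/
lemma exists_left_ker {K : Type} [DivisionRing K] {ι κ : Type} [Fintype ι] [DecidableEq ι]
    [Fintype κ] (B : Matrix ι κ K) (k : ℕ)
    (hk : k ≤ Module.finrank K (LinearMap.ker B.vecMulLinear)) :
    ∃ (V : Matrix (Fin k) ι K) (W : Matrix ι (Fin k) K), V * B = 0 ∧ V * W = 1 := by
  have : ∃ g : (Fin k → K) →ₗ[K] LinearMap.ker B.vecMulLinear, Function.Injective g := by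
    obtain ⟨f, hf⟩ := exists_linearIndependent_of_le_finrank hk
    exact ⟨Fintype.linearCombination K f, linearIndependent_iff_injective_fintypeLinearCombination.1 hf⟩
  obtain ⟨g, hg⟩ := this
  let g' := (LinearMap.ker B.vecMulLinear).subtype ∘ₗ g
  have hg' : LinearMap.ker g' = ⊥ := by
    rw [LinearMap.ker_eq_bot]
    exact Subtype.val_injective.comp hg
  obtain ⟨h, hh⟩ := LinearMap.exists_leftInverse_of_injective g' hg'
  refine ⟨LinearMap.toMatrixRight' g', LinearMap.toMatrixRight' h, ?_, ?_⟩
  · have : Matrix.toLinearMapRight' (LinearMap.toMatrixRight' g' * B) = 0 := by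
      rw [Matrix.toLinearMapRight'_mul]
      apply LinearMap.ext
      intro x
      have h1 : Matrix.toLinearMapRight' (LinearMap.toMatrixRight' g') = g' :=
        LinearMap.toMatrixRight'.symm_apply_apply g'
      rw [h1]
      exact (g x).2
    exact (LinearEquiv.map_eq_zero_iff Matrix.toLinearMapRight').1 this
  · rw [← LinearMap.toMatrixRight'_comp, hh, LinearMap.toMatrixRight'_id]

lemma lower_ker {K : Type} [DivisionRing K] {ι κ : Type} [Fintype ι]
    [Fintype κ] (B : Matrix ι κ K) : Fintype.card ι - Fintype.card κ ≤
     Module.finrank K (LinearMap.ker B.vecMulLinear) := by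
  have h1 := LinearMap.finrank_range_add_finrank_ker B.vecMulLinear
  have h2 := Submodule.finrank_le (LinearMap.range B.vecMulLinear)
  simp only [Module.finrank_fintype_fun_eq_card] at h1 h2
  omega

lemma exists_left_inv {K : Type} [DivisionRing K] {ι κ : Type} [Fintype ι] [DecidableEq ι]
    [Fintype κ] [DecidableEq κ] (B : Matrix ι κ K)
    (hk : Module.finrank K (LinearMap.ker B.vecMulLinear) + Fintype.card κ ≤ Fintype.card ι) :
    ∃ C : Matrix κ ι K, C * B = 1 := by
  have h1 := LinearMap.finrank_range_add_finrank_ker B.vecMulLinear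
  have h2 := Submodule.finrank_le (LinearMap.range B.vecMulLinear)
  simp only [Module.finrank_fintype_fun_eq_card] at h1 h2
  have hs : LinearMap.range B.vecMulLinear = ⊤ := by
    apply Submodule.eq_top_of_finrank_eq
    simp only [Module.finrank_fintype_fun_eq_card]
    omega
  obtain ⟨g, hg⟩ := LinearMap.exists_rightInverse_of_surjective _ hs
  refine ⟨LinearMap.toMatrixRight' g, ?_⟩
  have : LinearMap.toMatrixRight' (B.vecMulLinear) = B :=
    LinearMap.toMatrixRight'.apply_symm_apply B
  have h3 : LinearMap.toMatrixRight' g * B =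
      LinearMap.toMatrixRight' g * LinearMap.toMatrixRight' (B.vecMulLinear) := by rw [this]
  rw [h3, ← LinearMap.toMatrixRight'_comp, hg, LinearMap.toMatrixRight'_id]

lemma q_re_sum {ι : Type} (t : Finset ι) (f : ι → Quaternion ℝ) :
    (∑ i ∈ t, f i).re = ∑ i ∈ t, (f i).re := by
  classical
  induction t using Finset.induction_on with
  | empty => simp
  | insert a s h ih => simp [Finset.sum_insert h, ih]

lemma q_imI_sum {ι : Type} (t : Finset ι) (f : ι → Quaternion ℝ) :
    (∑ i ∈ t, f i).imI = ∑ i ∈ t, (f i).imI := by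
  classical
  induction t using Finset.induction_on with
  | empty => simp
  | insert a s h ih => simp [Finset.sum_insert h, ih]

lemma q_imJ_sum {ι : Type} (t : Finset ι) (f : ι → Quaternion ℝ) :
    (∑ i ∈ t, f i).imJ = ∑ i ∈ t, (f i).imJ := by
  classical
  induction t using Finset.induction_on with
  | empty => simp
  | insert a s h ih => simp [Finset.sum_insert h, ih]

lemma q_imK_sum {ι : Type} (t : Finset ι) (f : ι → Quaternion ℝ) :
    (∑ i ∈ t, f i).imK = ∑ i ∈ t, (f i).imK := by
  classical
  induction t using Finset.induction_on with
  | empty => simp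
  | insert a s h ih => simp [Finset.sum_insert h, ih]

lemma lower_so {m n : ℕ} (B : Matrix (Fin n) (Fin m) (Quaternion ℝ)) :
    (m - 4 * n) * (m - 4 * n - 1) / 2 ≤ Module.finrank ℝ (stabSub B) := by
  rw [← finrank_so]
  let R : Matrix (Fin m) (Fin n × Fin 4) ℝ := Matrix.of fun l p =>
    ![(B p.1 l).re, (B p.1 l).imI, (B p.1 l).imJ, (B p.1 l).imK] p.2
  have hk : m - 4 * n ≤ Module.finrank ℝ (LinearMap.ker R.vecMulLinear) := by
    have := lower_ker R
    simp only [Fintype.card_prod, Fintype.card_fin] at this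
    omega
  obtain ⟨V, W, hVR, hVW⟩ := exists_left_ker R _ hk
  have hBV : B * Vᵀ.map (algebraMap ℝ (Quaternion ℝ)) = 0 := by
    ext1 a i
    have h (b : Fin 4) := congrFun (congrFun hVR i) (a, b)
    have h0 := h 0
    have h1 := h 1
    have h2 := h 2
    have h3 := h 3
    simp only [Matrix.mul_apply, R, Matrix.of_apply] at h0 h1 h2 h3
    simp at h0 h1 h2 h3
    rw [Matrix.mul_apply]
    ext
    · simpa [mul_comm, q_re_sum] using h0
    · simpa [mul_comm, q_imI_sum] using h1
    · simpa [mul_comm, q_imJ_sum] using h2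
    · simpa [mul_comm, q_imK_sum] using h3
  let f : skw ℝ (m - 4 * n) →ₗ[ℝ] stabSub B :=
    { toFun := fun A => ⟨(Vᵀ * A.1 * V, 0, 0), by
        have hA : A.1ᴴ = - A.1 := A.2
        rw [conjTranspose_eq_transpose_of_trivial] at hA
        refine ⟨?_, ?_, ?_, ?_⟩
        · simp [hA, Matrix.mul_assoc]
        · simp
        · simp
        · simp only [Matrix.map_mul, ← Matrix.mul_assoc]
          rw [hBV]
          simp
          ext1 i j; simp⟩
      map_add' := by
        intro x y
        apply Subtype.ext
        simp [Matrix.mul_add, Matrix.add_mul]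
      map_smul' := by
        intro x y
        apply Subtype.ext
        simp }
  apply LinearMap.finrank_le_finrank_of_injective (f := f)
  intro A A' h
  have h1 : Vᵀ * A.1 * V = Vᵀ * A'.1 * V := congrArg (fun x => x.1.1) h
  have hW : Wᵀ * Vᵀ = 1 := by rw [← Matrix.transpose_mul, hVW, Matrix.transpose_one]
  have key (C : Matrix (Fin (m - 4 * n)) (Fin (m - 4 * n)) ℝ) : Wᵀ * (Vᵀ * C * V) * W = C := by
    calc _ = (Wᵀ * Vᵀ) * C * (V * W) := by simp only [Matrix.mul_assoc]
      _ = C := by rw [hW, hVW]; simp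
  apply Subtype.ext
  rw [← key A.1, h1, key]

lemma sp_mem {m n k : ℕ} {B : Matrix (Fin n) (Fin m) (Quaternion ℝ)}
    {V : Matrix (Fin k) (Fin n) (Quaternion ℝ)} (hVB : V * B = 0)
    {A : Matrix (Fin k) (Fin k) (Quaternion ℝ)} (hA : Aᴴ = - A) :
    ((0, 0, Vᴴ * A * V) : Matrix (Fin m) (Fin m) ℝ × Quaternion ℝ ×
      Matrix (Fin n) (Fin n) (Quaternion ℝ)) ∈ stabSub B := by
  refine ⟨?_, ?_, ?_, ?_⟩
  · simp
  · simp
  · simp [hA, Matrix.mul_assoc, Matrix.conjTranspose_mul]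
  · simp only [Matrix.mul_assoc]
    rw [hVB]
    ext1 i j; simp [Matrix.mul_apply]

lemma sp_key {n k : ℕ} 
    {V : Matrix (Fin k) (Fin n) (Quaternion ℝ)} {W : Matrix (Fin n) (Fin k) (Quaternion ℝ)}
    (hVW : V * W = 1) (C : Matrix (Fin k) (Fin k) (Quaternion ℝ)) :
    Wᴴ * (Vᴴ * C * V) * W = C := by
  have hW : Wᴴ * Vᴴ = 1 := by rw [← Matrix.conjTranspose_mul, hVW, Matrix.conjTranspose_one]
  calc _ = (Wᴴ * Vᴴ) * C * (V * W) := by simp only [Matrix.mul_assoc]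
      _ = C := by rw [hW, hVW]; simp

lemma lower_sp {m n : ℕ} (B : Matrix (Fin n) (Fin m) (Quaternion ℝ)) (k : ℕ)
    (hk : k ≤ Module.finrank (Quaternion ℝ) (LinearMap.ker B.vecMulLinear)) :
    k * (2 * k + 1) ≤ Module.finrank ℝ (stabSub B) := by
  rw [← finrank_sp]
  obtain ⟨V, W, hVB, hVW⟩ := exists_left_ker B _ hk
  let f : skw (Quaternion ℝ) k →ₗ[ℝ] stabSub B :=
    { toFun := fun A => ⟨(0, 0, Vᴴ * A.1 * V), sp_mem hVB A.2⟩
      map_add' := by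
        intro x y
        apply Subtype.ext
        simp [Matrix.mul_add, Matrix.add_mul]
      map_smul' := by
        intro x y
        apply Subtype.ext
        simp }
  apply LinearMap.finrank_le_finrank_of_injective (f := f)
  intro A A' h
  have h1 : Vᴴ * A.1 * V = Vᴴ * A'.1 * V := congrArg (fun x => x.1.2.2) h
  apply Subtype.ext
  rw [← sp_key hVW A.1, h1, sp_key hVW]

lemma lower_sp' {m n : ℕ} (B : Matrix (Fin n) (Fin m) (Quaternion ℝ)) (k : ℕ)
    (hk : k ≤ Module.finrank (Quaternion ℝ) (LinearMap.ker B.vecMulLinear))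
    (e : stabSub B) (he : e.1.2.1 ≠ 0) :
    1 + k * (2 * k + 1) ≤ Module.finrank ℝ (stabSub B) := by
  have h1 : Module.finrank ℝ (ℝ × skw (Quaternion ℝ) k) = 1 + k * (2 * k + 1) := by
    rw [Module.finrank_prod, finrank_sp]; simp
  rw [← h1]
  obtain ⟨V, W, hVB, hVW⟩ := exists_left_ker B _ hk
  let f : (ℝ × skw (Quaternion ℝ) k) →ₗ[ℝ] stabSub B :=
    { toFun := fun A => A.1 • e + ⟨(0, 0, Vᴴ * A.2.1 * V), sp_mem hVB A.2.2⟩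
      map_add' := by
        intro x y
        apply Subtype.ext
        simp [Matrix.mul_add, Matrix.add_mul, add_smul]
        ext <;> simp <;> ring
      map_smul' := by
        intro x y
        apply Subtype.ext
        simp [mul_smul] }
  apply LinearMap.finrank_le_finrank_of_injective (f := f)
  rw [← LinearMap.ker_eq_bot, LinearMap.ker_eq_bot']
  rintro ⟨t, A⟩ h
  have h1 : t • e.1.2.1 + 0 = 0 := congrArg (fun x => x.1.2.1) h
  have ht : t = 0 := by simpa [he] using h1
  have h2 : t • e.1.2.2 + Vᴴ * A.1 * V = 0 := congrArg (fun x => x.1.2.2) h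
  rw [ht, zero_smul, zero_add] at h2
  have h3 := sp_key hVW A.1
  rw [h2] at h3
  simp only [Matrix.mul_zero, Matrix.zero_mul] at h3
  ext1
  · exact ht
  · exact Subtype.ext h3.symm

lemma conj_self_zero {ι κ : Type} [Fintype ι] {M : Matrix ι κ (Quaternion ℝ)}
    (h : Mᴴ * M = 0) : M = 0 := by
  ext1 a i
  have h1 := congrFun (congrFun h i) i
  rw [Matrix.mul_apply] at h1
  have h2 : ∑ b, Quaternion.normSq (M b i) = 0 := by
    have := congrArg (fun q : Quaternion ℝ => q.re) h1
    simp only [Matrix.conjTranspose_apply, Quaternion.star_mul_self, q_re_sum] at this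
    simpa using this
  rw [Finset.sum_eq_zero_iff_of_nonneg (fun _ _ => Quaternion.normSq_nonneg)] at h2
  simpa using h2 a (Finset.mem_univ _)

lemma lower_two {n : ℕ} (hn : 2 ≤ n) (B : Matrix (Fin n) (Fin 2) (Quaternion ℝ)) :
    1 + (n - 2) * (2 * (n - 2) + 1) ≤ Module.finrank ℝ (stabSub B) := by
  by_cases hk : n - 1 ≤ Module.finrank (Quaternion ℝ) (LinearMap.ker B.vecMulLinear)
  · refine le_trans ?_ (lower_sp B _ hk)
    obtain ⟨k, rfl⟩ := Nat.exists_eq_add_of_le hn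
    have h1 : 2 + k - 1 = k + 1 := by omega
    have h2 : 2 + k - 2 = k := by omega
    rw [h1, h2]; nlinarith
  · obtain ⟨C, hC⟩ := exists_left_inv B (by simp; omega)
    have hker := lower_ker B
    simp only [Fintype.card_fin] at hker
    set H := Bᴴ * B with hH
    have hHH : Hᴴ = H := by simp [H]
    obtain ⟨a, ha⟩ : ∃ a : ℝ, H 0 0 = a := by
      have := congrFun (congrFun hHH 0) 0
      exact ⟨_, Quaternion.star_eq_self.1 this⟩
    obtain ⟨d, hd⟩ : ∃ a : ℝ, H 1 1 = a := by
      have := congrFun (congrFun hHH 1) 1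
      exact ⟨_, Quaternion.star_eq_self.1 this⟩
    obtain ⟨q, hq⟩ : ∃ q, H 0 1 = q := ⟨_, rfl⟩
    have hq' : H 1 0 = star q := by
      have := congrFun (congrFun hHH 1) 0
      rw [Matrix.conjTranspose_apply, hq] at this
      exact this.symm
    let J : Matrix (Fin 2) (Fin 2) (Quaternion ℝ) := !![(d : Quaternion ℝ), -q; -star q, (a : Quaternion ℝ)]
    set D : ℝ := a * d - Quaternion.normSq q with hD
    have hHe : H = !![(a : Quaternion ℝ), q; star q, (d : Quaternion ℝ)] := by
      ext1 i j; fin_cases i <;> fin_cases j <;> simp [ha, hd, hq, hq']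
    have hJH : J * H = D • (1 : Matrix (Fin 2) (Fin 2) (Quaternion ℝ)) := by
      rw [hHe]
      ext1 i j
      fin_cases i <;> fin_cases j <;> simp [J, Matrix.mul_apply, Fin.sum_univ_two, hD]
      all_goals (ext <;> simp [Quaternion.normSq_def'] <;> ring)
    have hHJ : H * J = D • (1 : Matrix (Fin 2) (Fin 2) (Quaternion ℝ)) := by
      rw [hHe]
      ext1 i j
      fin_cases i <;> fin_cases j <;> simp [J, Matrix.mul_apply, Fin.sum_univ_two, hD]
      all_goals (ext <;> simp [Quaternion.normSq_def'] <;> ring)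
    have hJJ : Jᴴ = J := by
      ext1 i j
      fin_cases i <;> fin_cases j <;> simp [J]
    have hD0 : D ≠ 0 := by
      intro h0
      rw [h0, zero_smul] at hHJ
      have h1 : (B * J)ᴴ * (B * J) = 0 := by
        rw [Matrix.conjTranspose_mul, Matrix.mul_assoc, ← Matrix.mul_assoc _ B J, ← hH, hHJ, Matrix.mul_zero]
      have h2 := conj_self_zero h1
      have h3 : J = 0 := by
        calc J = C * B * J := by rw [hC, Matrix.one_mul]
          _ = 0 := by rw [Matrix.mul_assoc, h2, Matrix.mul_zero]
      have e1 : (a : Quaternion ℝ) = 0 := congrFun (congrFun h3 1) 1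
      have e2 : (d : Quaternion ℝ) = 0 := congrFun (congrFun h3 0) 0
      have e3 : -q = 0 := congrFun (congrFun h3 0) 1
      have e4 : q = 0 := neg_eq_zero.1 e3
      have h4 : Bᴴ * B = 0 := by
        rw [← hH, hHe, e1, e2, e4]
        ext1 i j
        fin_cases i <;> fin_cases j <;> simp
      rw [conj_self_zero h4, Matrix.mul_zero] at hC
      have := congrFun (congrFun hC 0) 0
      simp at this
    obtain ⟨s, hs0, hsr, hsq⟩ : ∃ s : Quaternion ℝ, s ≠ 0 ∧ s.re = 0 ∧ s * q = q * s := by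
      by_cases h : q.im = 0
      · refine ⟨⟨0,1,0,0⟩, ?_, rfl, ?_⟩
        · intro h; simpa using congrArg (fun q : Quaternion ℝ => q.imI) h
        · have : q = q.re := by
            have := Quaternion.re_add_im q
            rw [h, add_zero] at this
            exact this.symm
          rw [this]
          exact (Quaternion.coe_commutes _ _).symm
      · refine ⟨q.im, h, by simp, ?_⟩
        have : q.im = q - q.re := by
          rw [eq_sub_iff_add_eq']; exact Quaternion.re_add_im q
        rw [this, sub_mul, mul_sub, Quaternion.coe_commutes]
    have hss : star s = -s := Quaternion.star_eq_neg.2 hsr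
    have hsq' : s * star q = star q * s := by
      have := congrArg star hsq
      simp only [star_mul, hss] at this
      simpa using this.symm
    let E : Matrix (Fin 2) (Fin 2) (Quaternion ℝ) := Matrix.diagonal fun _ => s
    have hEE : Eᴴ = -E := by
      ext1 i j
      fin_cases i <;> fin_cases j <;> simp [E, hss]
    have hEJ : E * J = J * E := by
      ext1 i j
      fin_cases i <;> fin_cases j <;> simp [E, J, hsq, hsq', Quaternion.coe_commutes]
    refine lower_sp' B _ hker ⟨(0, D • s, B * E * J * Bᴴ), ?_⟩ ?_
    · refine ⟨?_, ?_, ?_, ?_⟩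
      · simp
      · simp [hsr]
      · simp only [Matrix.conjTranspose_mul, hEE, hJJ, Matrix.conjTranspose_conjTranspose]
        simp only [Matrix.mul_assoc, Matrix.mul_neg, Matrix.neg_mul]
        rw [← Matrix.mul_assoc J E, ← hEJ, Matrix.mul_assoc]
      · have : B * E * J * Bᴴ * B = D • (B * E) := by
          rw [Matrix.mul_assoc _ Bᴴ B, ← hH, Matrix.mul_assoc _ J, hJH]; simp
        simp only [this]
        ext1 i j
        have h0 : (0 : Matrix (Fin 2) (Fin 2) ℝ).map (algebraMap ℝ (Quaternion ℝ)) = 0 := by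
          ext1 i j; simp
        rw [h0]
        simp [E]
    · simp [hD0, hs0]

def qI : Quaternion ℝ := ⟨0, 1, 0, 0⟩
def qJ : Quaternion ℝ := ⟨0, 0, 1, 0⟩
def qK : Quaternion ℝ := ⟨0, 0, 0, 1⟩

@[simp] lemma qI_re : qI.re = 0 := rfl
@[simp] lemma qI_imI : qI.imI = 1 := rfl
@[simp] lemma qI_imJ : qI.imJ = 0 := rfl
@[simp] lemma qI_imK : qI.imK = 0 := rfl
@[simp] lemma qJ_re : qJ.re = 0 := rfl
@[simp] lemma qJ_imI : qJ.imI = 0 := rfl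
@[simp] lemma qJ_imJ : qJ.imJ = 1 := rfl
@[simp] lemma qJ_imK : qJ.imK = 0 := rfl
@[simp] lemma qK_re : qK.re = 0 := rfl
@[simp] lemma qK_imI : qK.imI = 0 := rfl
@[simp] lemma qK_imJ : qK.imJ = 0 := rfl
@[simp] lemma qK_imK : qK.imK = 1 := rfl

lemma comm_IJ {s : Quaternion ℝ} (h0 : s.re = 0) (h1 : s * qI = qI * s) (h2 : s * qJ = qJ * s) :
    s = 0 := by
  have a1 := congrArg (fun q : Quaternion ℝ => q.imK) h1
  have a2 := congrArg (fun q : Quaternion ℝ => q.imJ) h1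
  have a3 := congrArg (fun q : Quaternion ℝ => q.imK) h2
  simp at a1 a2 a3
  ext <;> simp <;> linarith

lemma comm_I {s : Quaternion ℝ} (h0 : s.re = 0) (h1 : s * qI = qI * s) (h2 : s.imI = 0) :
    s = 0 := by
  have a1 := congrArg (fun q : Quaternion ℝ => q.imK) h1
  have a2 := congrArg (fun q : Quaternion ℝ => q.imJ) h1
  simp at a1 a2
  ext <;> simp <;> linarith

lemma stab_entry {m n : ℕ} {B : Matrix (Fin n) (Fin m) (Quaternion ℝ)} {X s Y}
    (hp : (X, s, Y) ∈ stabSub B) (a : Fin n) (j : Fin m) :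
    ∑ b, Y a b * B b j = ∑ k, B a k * (X k j : Quaternion ℝ) + B a j * s := by
  obtain ⟨-, -, -, h⟩ := hp
  have := congrFun (congrFun h a) j
  simp only [Matrix.sub_apply, Matrix.mul_apply, Matrix.map_apply] at this
  rw [sub_eq_iff_eq_add'] at this
  exact this

lemma stab_comm {m n : ℕ} {B : Matrix (Fin n) (Fin m) (Quaternion ℝ)} {X s Y}
    (hp : (X, s, Y) ∈ stabSub B) (i j : Fin m) :
    ∑ k, ((Bᴴ * B) i k).re * X k j = ∑ k, X i k * ((Bᴴ * B) k j).re := by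
  obtain ⟨h1, h2, h3, h⟩ := hp
  simp only at h1 h2 h3 h
  let Z : Matrix (Fin m) (Fin m) (Quaternion ℝ) := X.map (algebraMap ℝ (Quaternion ℝ)) +
    Matrix.diagonal fun _ => s
  have hss : star s = -s := Quaternion.star_eq_neg.2 h2
  have hZ : Zᴴ = -Z := by
    ext1 k l
    have hx : X l k = - X k l := congrFun (congrFun h1 k) l
    simp only [Z, Matrix.conjTranspose_apply, Matrix.add_apply, Matrix.map_apply, Matrix.neg_apply,
      hx, star_add]
    by_cases hkl : k = l
    · subst hkl; simp [hss]; abel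
    · simp [Matrix.diagonal_apply_ne _ hkl, Matrix.diagonal_apply_ne _ (Ne.symm hkl)]
  have hYB : Y * B = B * Z := by
    rw [sub_eq_iff_eq_add'] at h
    rw [h, Matrix.mul_add]
    congr 1
    ext1 k l
    simp
  have e1 : Bᴴ * Y * B = Bᴴ * B * Z := by rw [Matrix.mul_assoc, hYB, Matrix.mul_assoc]
  have e2 : Bᴴ * B * Z = Z * (Bᴴ * B) := by
    have := congrArg Matrix.conjTranspose e1
    simp only [Matrix.conjTranspose_mul, Matrix.conjTranspose_conjTranspose, h3, hZ,
      Matrix.neg_mul, Matrix.mul_neg, neg_inj] at this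
    rw [← this, ← e1, Matrix.mul_assoc]
  clear e1
  generalize Bᴴ * B = H at e2 ⊢
  have e3 := congrArg (fun q : Quaternion ℝ => q.re) (congrFun (congrFun e2 i) j)
  simp only [Z, Matrix.mul_add, Matrix.add_mul, Matrix.add_apply, Matrix.mul_diagonal,
    Matrix.diagonal_mul] at e3
  rw [Matrix.mul_apply, Matrix.mul_apply] at e3
  simp only [Quaternion.re_add, q_re_sum, Matrix.map_apply] at e3
  have e4 : (H i j * s).re = (s * H i j).re := by
    simp; ring
  rw [e4, add_left_inj] at e3
  simpa using e3

lemma X_zero {m n : ℕ} {B v : Matrix (Fin n) (Fin m) (Quaternion ℝ)}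
    (hB : ∀ a l, B a l = ((2 : ℝ) ^ (m - l.val)) • v a l)
    (h0 : ∀ a i j, i ≠ j → (star (v a i) * v a j).re = 0)
    (h3 : ∀ l, ∑ a, Quaternion.normSq (v a l) ≤ 3)
    {X s Y} (hp : (X, s, Y) ∈ stabSub B) {i j : Fin m} (hij : i < j)
    (hi : 1 ≤ ∑ a, Quaternion.normSq (v a i)) : X i j = 0 := by
  have hoff (i j : Fin m) (h : i ≠ j) : ((Bᴴ * B) i j).re = 0 := by
    rw [Matrix.mul_apply, q_re_sum]
    apply Finset.sum_eq_zero
    intro a _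
    rw [Matrix.conjTranspose_apply, hB, hB, StarModule.star_smul, smul_mul_smul_comm,
      Quaternion.re_smul, h0 a i j h, smul_zero]
  have hdiag (i : Fin m) : ((Bᴴ * B) i i).re = 
      ((2:ℝ) ^ (m - i.val)) ^ 2 * ∑ a, Quaternion.normSq (v a i) := by
    rw [Matrix.mul_apply, q_re_sum, Finset.mul_sum]
    apply Finset.sum_congr rfl
    intro a _
    rw [Matrix.conjTranspose_apply, hB, StarModule.star_smul, smul_mul_smul_comm,
      Quaternion.re_smul, Quaternion.star_mul_self, Quaternion.re_coe, smul_eq_mul, star_trivial]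
    ring
  have h := stab_comm hp i j
  rw [Finset.sum_eq_single i (fun k _ hk => by rw [hoff i k hk.symm, zero_mul]) (by simp),
    Finset.sum_eq_single j (fun k _ hk => by rw [hoff k j hk, mul_zero]) (by simp),
    hdiag, hdiag] at h
  set Ni := ∑ a, Quaternion.normSq (v a i)
  set Nj := ∑ a, Quaternion.normSq (v a j)
  have hNj : Nj ≤ 3 := h3 j
  have hpow : (2:ℝ) * 2 ^ (m - j.val) ≤ 2 ^ (m - i.val) := by
    rw [← pow_succ']
    apply pow_le_pow_right₀ (by norm_num)
    have := i.2
    have := j.2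
    have : i.val < j.val := hij
    omega
  have hpos : (0:ℝ) < 2 ^ (m - j.val) := by positivity
  set x := (2:ℝ) ^ (m - i.val)
  set y := (2:ℝ) ^ (m - j.val)
  have hx : 4 * y ^ 2 ≤ x ^ 2 := by nlinarith
  have hlt : y ^ 2 * Nj < x ^ 2 * Ni := by
    have : 0 < y ^ 2 := by positivity
    nlinarith
  have : (x ^ 2 * Ni - y ^ 2 * Nj) * X i j = 0 := by linarith
  rcases mul_eq_zero.1 this with h | h
  · linarith
  · exact h

lemma entry_v {m n : ℕ} {B v : Matrix (Fin n) (Fin m) (Quaternion ℝ)}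
    (hB : ∀ a l, B a l = ((2 : ℝ) ^ (m - l.val)) • v a l)
    {s Y} (hp : (0, s, Y) ∈ stabSub B) (a : Fin n) (j : Fin m) :
    ∑ b, Y a b * v b j = v a j * s := by
  have h := stab_entry hp a j
  simp only [hB, Matrix.zero_apply, Quaternion.coe_zero, mul_zero, Finset.sum_const_zero, zero_add,
    mul_smul_comm, smul_mul_assoc, ← Finset.smul_sum] at h
  have h2 : ((2 : ℝ) ^ (m - j.val)) ≠ 0 := by positivity
  exact smul_right_injective _ h2 h

lemma sum_ind_le (n c : ℕ) : ∑ a : Fin n, (if a.val = c then (1:ℝ) else 0) ≤ 1 := by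
  by_cases h : c < n
  · rw [Finset.sum_eq_single (⟨c, h⟩ : Fin n)]
    · simp
    · intro b _ hb
      rw [if_neg]; intro h'; exact hb (Fin.ext h')
    · simp
  · rw [Finset.sum_eq_zero]
    · norm_num
    · intro b _
      rw [if_neg]; have := b.2; omega

lemma col_sum {n : ℕ} (y : Fin n → Quaternion ℝ) (c : ℕ) (hc : c < n) (q : Quaternion ℝ) :
    ∑ b : Fin n, y b * (if b.val = c then q else 0) = y ⟨c, hc⟩ * q := by
  rw [Finset.sum_eq_single (⟨c, hc⟩ : Fin n)]
  · simp
  · intro b _ hb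
    rw [if_neg, mul_zero]; intro h'; exact hb (Fin.ext h')
  · simp

/-- units -/
noncomputable def u3 (b : ℕ) : Quaternion ℝ := if b = 0 then qI else if b = 1 then qJ else qK

lemma u3_norm (b : ℕ) : Quaternion.normSq (u3 b) = 1 := by
  unfold u3
  split_ifs <;> simp [Quaternion.normSq_def']

lemma u3_re (b : ℕ) : (u3 b).re = 0 := by
  unfold u3
  split_ifs <;> simp

lemma u3_orth {b c : ℕ} (hb : b < 3) (hc : c < 3) (h : b ≠ c) : (star (u3 b) * u3 c).re = 0 := by
  unfold u3
  interval_cases b <;> interval_cases c <;> simp at h ⊢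

noncomputable def v1 (n m : ℕ) : Matrix (Fin n) (Fin m) (Quaternion ℝ) := Matrix.of fun a l =>
  if l.val < n then (if a.val = l.val then 1 else 0) else
    (if a.val = (l.val - n) / 3 then u3 ((l.val - n) % 3) else 0)

lemma v1_orth {n m : ℕ} (a : Fin n) (i j : Fin m) (h : i ≠ j) :
    (star (v1 n m a i) * v1 n m a j).re = 0 := by
  have h' : i.val ≠ j.val := fun h' => h (Fin.ext h')
  simp only [v1, Matrix.of_apply]
  split_ifs
  all_goals try (simp; done)
  · omega
  · simp [u3_re]
  · simp [u3_re]
  · apply u3_orth (Nat.mod_lt _ (by norm_num)) (Nat.mod_lt _ (by norm_num))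
    omega

lemma v1_norm {n m : ℕ} (a : Fin n) (l : Fin m) : Quaternion.normSq (v1 n m a l) =
    if a.val = (if l.val < n then l.val else (l.val - n) / 3) then 1 else 0 := by
  simp only [v1, Matrix.of_apply]
  split_ifs <;> simp [u3_norm]

lemma v1_le {n m : ℕ} (l : Fin m) : ∑ a, Quaternion.normSq (v1 n m a l) ≤ 3 := by
  simp only [v1_norm]
  exact (sum_ind_le _ _).trans (by norm_num)

lemma v1_ge {n m : ℕ} (l : Fin m) (hl : l.val < 4 * n) :
    1 ≤ ∑ a, Quaternion.normSq (v1 n m a l) := by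
  let c : Fin n := ⟨if l.val < n then l.val else (l.val - n) / 3, by split_ifs <;> omega⟩
  refine le_trans ?_ (Finset.single_le_sum (fun a _ => Quaternion.normSq_nonneg) (Finset.mem_univ c))
  rw [v1_norm, if_pos rfl]

lemma skew_X {m n : ℕ} {B : Matrix (Fin n) (Fin m) (Quaternion ℝ)} {X s Y}
    (hp : (X, s, Y) ∈ stabSub B) (i j : Fin m) : X i j = - X j i :=
  congrFun (congrFun hp.1 j) i

lemma skew_Y {m n : ℕ} {B : Matrix (Fin n) (Fin m) (Quaternion ℝ)} {X s Y}
    (hp : (X, s, Y) ∈ stabSub B) (i j : Fin n) : Y i j = - star (Y j i) := by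
  have : star (Y j i) = - Y i j := congrFun (congrFun hp.2.2.1 i) j
  rw [this, neg_neg]

lemma upper1 {m n : ℕ} (hn : 1 ≤ n) (hm : n + 2 ≤ m) :
    ∃ B : Matrix (Fin n) (Fin m) (Quaternion ℝ), Module.finrank ℝ (stabSub B) ≤
      (m - 4 * n) * (m - 4 * n - 1) / 2 := by
  let B : Matrix (Fin n) (Fin m) (Quaternion ℝ) :=
    Matrix.of fun a l => ((2 : ℝ) ^ (m - l.val)) • v1 n m a l
  have hB : ∀ a l, B a l = ((2 : ℝ) ^ (m - l.val)) • v1 n m a l := fun _ _ => rfl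
  refine ⟨B, ?_⟩
  rw [← finrank_so]
  let emb : Fin (m - 4 * n) → Fin m := fun i => ⟨4 * n + i.val, by omega⟩
  let f : stabSub B →ₗ[ℝ] skw ℝ (m - 4 * n) :=
    { toFun := fun p => ⟨p.1.1.submatrix emb emb, by
        change _ = _
        ext i j
        have : (p.1.1)ᵀ = - p.1.1 := p.2.1
        exact congrFun (congrFun this (emb i)) (emb j)⟩
      map_add' := by intro x y; rfl
      map_smul' := by intro x y; rfl }
  apply LinearMap.finrank_le_finrank_of_injective (f := f)
  rw [← LinearMap.ker_eq_bot, LinearMap.ker_eq_bot']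
  rintro ⟨⟨X, s, Y⟩, hp⟩ h
  have hsub : X.submatrix emb emb = 0 := congrArg Subtype.val h
  have hlt (i j : Fin m) (hij : i < j) : X i j = 0 := by
    by_cases hi : i.val < 4 * n
    · exact X_zero hB v1_orth v1_le hp hij (v1_ge i hi)
    · have hij' : i.val < j.val := hij
      have := congrFun (congrFun hsub ⟨i.val - 4 * n, by omega⟩) ⟨j.val - 4 * n, by omega⟩
      simp only [Matrix.submatrix_apply, emb, Matrix.zero_apply] at this
      convert this using 2 <;> ext <;> simp <;> omega
  have hX : X = 0 := by
    ext i j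
    rcases lt_trichotomy i j with h | h | h
    · exact hlt i j h
    · subst h
      have := skew_X hp i i
      simp; linarith
    · rw [skew_X hp, hlt j i h]; simp
  subst hX
  have hent := entry_v hB hp
  have hY (a b : Fin n) : Y a b = if a.val = b.val then s else 0 := by
    have := hent a ⟨b.val, by omega⟩
    simp only [v1, Matrix.of_apply, b.2, if_true] at this
    rw [col_sum _ _ b.2] at this
    simpa using this
  have hI : s * qI = qI * s := by
    have := hent ⟨0, hn⟩ ⟨n, by omega⟩
    simp only [v1, Matrix.of_apply, lt_irrefl, if_false, Nat.sub_self, Nat.zero_div, Nat.zero_mod] at this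
    rw [col_sum _ _ hn] at this
    simpa [hY, u3] using this
  have hJ : s * qJ = qJ * s := by
    have := hent ⟨0, hn⟩ ⟨n + 1, by omega⟩
    have e0 : ¬ (n + 1 < n) := by omega
    have e1 : n + 1 - n = 1 := by omega
    have e2 : 1 / 3 = 0 := by norm_num
    have e3 : 1 % 3 = 1 := by norm_num
    simp only [v1, Matrix.of_apply, e0, if_false, e1, e2, e3] at this
    rw [col_sum _ _ hn] at this
    simpa [hY, u3] using this
  have hs : s = 0 := comm_IJ hp.2.1 hI hJ
  have hY0 : Y = 0 := by
    ext1 a b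
    rw [hY, hs]; simp
  subst hs hY0
  rfl

noncomputable def v2 (n m : ℕ) : Matrix (Fin n) (Fin m) (Quaternion ℝ) := Matrix.of fun a l =>
  if a.val = l.val then 1 else if a.val = 0 ∧ l.val = 1 then qI else
    if a.val = 1 ∧ l.val + 1 = m then qJ else 0

lemma v2_orth {n m : ℕ} (a : Fin n) (i j : Fin m) (h : i ≠ j) :
    (star (v2 n m a i) * v2 n m a j).re = 0 := by
  have h' : i.val ≠ j.val := fun h' => h (Fin.ext h')
  simp only [v2, Matrix.of_apply]
  split_ifs
  all_goals first | omega | (simp; done)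

lemma v2_le {n m : ℕ} (l : Fin m) : ∑ a, Quaternion.normSq (v2 n m a l) ≤ 3 := by
  have h1 (a : Fin n) : Quaternion.normSq (v2 n m a l) ≤ (if a.val = l.val then (1:ℝ) else 0) +
      (if a.val = 0 then (1:ℝ) else 0) + (if a.val = 1 then (1:ℝ) else 0) := by
    simp only [v2, Matrix.of_apply]
    split_ifs
    all_goals first | omega | (simp [Quaternion.normSq_def']; done) | 
      (simp [Quaternion.normSq_def']; norm_num; done)
  refine (Finset.sum_le_sum fun a _ => h1 a).trans ?_
  rw [Finset.sum_add_distrib, Finset.sum_add_distrib]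
  have := sum_ind_le n l.val
  have := sum_ind_le n 0
  have := sum_ind_le n 1
  linarith

lemma v2_ge {n m : ℕ} (hn : 2 ≤ n) (hm : m ≤ n + 1) (l : Fin m) :
    1 ≤ ∑ a, Quaternion.normSq (v2 n m a l) := by
  let c : Fin n := ⟨if l.val < n then l.val else 1, by split_ifs <;> omega⟩
  refine le_trans ?_ (Finset.single_le_sum (fun a _ => Quaternion.normSq_nonneg) (Finset.mem_univ c))
  simp only [v2, Matrix.of_apply, c]
  have := l.2
  by_cases h : l.val < n
  · simp [h]
  · have h2 : l.val + 1 = m := by omega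
    have h3 : ¬ (1 = l.val) := by omega
    simp [h, h2, h3, Quaternion.normSq_def']

lemma v2_struct {m n : ℕ} (hn : 2 ≤ n) (hm2 : 2 ≤ m) (hm : m ≤ n + 1)
    {B : Matrix (Fin n) (Fin m) (Quaternion ℝ)}
    (hB : ∀ a l, B a l = ((2 : ℝ) ^ (m - l.val)) • v2 n m a l) {X s Y}
    (hp : (X, s, Y) ∈ stabSub B) :
    X = 0 ∧ s * qI = qI * s ∧ (3 ≤ m → s * qJ = qJ * s) ∧
      (s = 0 → ∀ a b : Fin n, b.val < m → Y a b = 0) := by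
  have hlt (i j : Fin m) (hij : i < j) : X i j = 0 :=
    X_zero hB v2_orth v2_le hp hij (v2_ge hn hm i)
  have hX : X = 0 := by
    ext i j
    rcases lt_trichotomy i j with h | h | h
    · exact hlt i j h
    · subst h
      have := skew_X hp i i
      simp; linarith
    · rw [skew_X hp, hlt j i h]; simp
  subst hX
  refine ⟨rfl, ?_⟩
  have hent := entry_v hB hp
  have hY0 (a : Fin n) : Y a ⟨0, by omega⟩ = if a.val = 0 then s else 0 := by
    have := hent a ⟨0, by omega⟩
    have e : ¬ (0 + 1 = m) := by omega
    simp only [v2, Matrix.of_apply, e, and_false, if_false, zero_ne_one] at this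
    rw [col_sum _ 0 (by omega)] at this
    simpa using this
  have hY1 (a : Fin n) : Y a ⟨1, hn⟩ + Y a ⟨0, by omega⟩ * qI =
      (if a.val = 1 then s else if a.val = 0 then qI * s else 0) := by
    have := hent a ⟨1, by omega⟩
    have e (b : Fin n) : v2 n m b ⟨1, by omega⟩ = (if b.val = 1 then 1 else 0) +
        (if b.val = 0 then qI else 0) := by
      simp only [v2, Matrix.of_apply]
      split_ifs <;> first | omega | (simp; done) | (exfalso; simp_all; done)
    simp only [e, mul_add, Finset.sum_add_distrib] at this
    rw [col_sum _ 0 (by omega), col_sum _ 1 hn, mul_one] at this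
    rw [this]
    split_ifs <;> first | omega | (simp; done) | (exfalso; simp_all; done)
  have hI : s * qI = qI * s := by
    have h1 := hY1 ⟨0, by omega⟩
    rw [skew_Y hp, hY0, hY0] at h1
    simpa using h1
  have hY1' (a : Fin n) : Y a ⟨1, hn⟩ = if a.val = 1 then s else 0 := by
    have h1 := hY1 a
    rw [hY0] at h1
    split_ifs at h1 ⊢
    · omega
    · simpa using h1
    · rw [hI] at h1; simpa using h1
    · simpa using h1
  have hl (a : Fin n) (l : Fin m) (h2 : 2 ≤ l.val) :
      ∑ b : Fin n, Y a b * (if b.val = l.val then 1 else 0) +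
        (if l.val + 1 = m then Y a ⟨1, hn⟩ * qJ else 0) = v2 n m a l * s := by
    rw [← hent a l]
    have e (b : Fin n) : v2 n m b l = (if b.val = l.val then 1 else 0) +
        (if b.val = 1 then (if l.val + 1 = m then qJ else 0) else 0) := by
      simp only [v2, Matrix.of_apply]
      split_ifs <;> first | omega | (simp; done) | (exfalso; simp_all; done)
    simp only [e, mul_add, Finset.sum_add_distrib]
    rw [col_sum _ 1 hn]
    congr 1
    split_ifs <;> simp
  refine ⟨hI, ?_, ?_⟩
  · intro h3
    have h := hl ⟨1, hn⟩ ⟨m - 1, by omega⟩ (by simp; omega)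
    rw [Finset.sum_eq_zero, hY1'] at h
    · have e1 : m - 1 + 1 = m := by omega
      have e2 : ¬ (1 = m - 1) := by omega
      simpa [v2, e1, e2] using h
    · intro b _
      by_cases hb : b.val = m - 1
      · rw [skew_Y hp, hY1', if_neg (by omega)]; simp
      · simp [hb]
  · rintro rfl a b hb
    by_cases h2 : 2 ≤ b.val
    · have h := hl a ⟨b.val, hb⟩ h2
      rw [hY1', col_sum _ _ b.2] at h
      simpa using h
    · obtain h | h : b.val = 0 ∨ b.val = 1 := by omega
      · have : b = ⟨0, by omega⟩ := Fin.ext h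
        rw [this, hY0]; simp
      · have : b = ⟨1, by omega⟩ := Fin.ext h
        rw [this, hY1']; simp

/-- The lower right block. -/
def blk {m n : ℕ} (B : Matrix (Fin n) (Fin m) (Quaternion ℝ)) :
    stabSub B →ₗ[ℝ] skw (Quaternion ℝ) (n - m) where
  toFun := fun p => ⟨p.1.2.2.submatrix (fun i => ⟨m + i.val, by omega⟩)
      (fun i => ⟨m + i.val, by omega⟩), by
    change _ = _
    ext1 i j
    have : (p.1.2.2)ᴴ = - p.1.2.2 := p.2.2.2.1
    exact congrFun (congrFun this ⟨m + i.val, by omega⟩) ⟨m + j.val, by omega⟩⟩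
  map_add' := by intro x y; rfl
  map_smul' := by intro x y; rfl

lemma blk_zero {m n : ℕ} {B : Matrix (Fin n) (Fin m) (Quaternion ℝ)} {X s Y}
    (hp : (X, s, Y) ∈ stabSub B) (hb : blk B ⟨_, hp⟩ = 0)
    (h : ∀ a b : Fin n, b.val < m → Y a b = 0) : Y = 0 := by
  ext1 a b
  by_cases h1 : b.val < m
  · exact h a b h1
  by_cases h2 : a.val < m
  · rw [skew_Y hp, h b a h2]; simp
  have h3 : Y ⟨m + (a.val - m), by omega⟩ ⟨m + (b.val - m), by omega⟩ = 0 :=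
    congrFun (congrFun (congrArg Subtype.val hb) ⟨a.val - m, by omega⟩) ⟨b.val - m, by omega⟩
  have ea : (⟨m + (a.val - m), by omega⟩ : Fin n) = a := by ext; simp; omega
  have eb : (⟨m + (b.val - m), by omega⟩ : Fin n) = b := by ext; simp; omega
  rw [ea, eb] at h3
  exact h3

lemma upper2 {m n : ℕ} (hm3 : 3 ≤ m) (hm : m ≤ n + 1) :
    ∃ B : Matrix (Fin n) (Fin m) (Quaternion ℝ), Module.finrank ℝ (stabSub B) ≤
      (n - m) * (2 * (n - m) + 1) := by
  let B : Matrix (Fin n) (Fin m) (Quaternion ℝ) :=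
    Matrix.of fun a l => ((2 : ℝ) ^ (m - l.val)) • v2 n m a l
  have hB : ∀ a l, B a l = ((2 : ℝ) ^ (m - l.val)) • v2 n m a l := fun _ _ => rfl
  refine ⟨B, ?_⟩
  rw [← finrank_sp]
  apply LinearMap.finrank_le_finrank_of_injective (f := blk B)
  rw [← LinearMap.ker_eq_bot, LinearMap.ker_eq_bot']
  rintro ⟨⟨X, s, Y⟩, hp⟩ h
  obtain ⟨rfl, h1, h2, h3⟩ := v2_struct (by omega) (by omega) hm hB hp
  have hs : s = 0 := comm_IJ hp.2.1 h1 (h2 hm3)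
  have hY := blk_zero hp h (h3 hs)
  subst hs hY
  rfl

lemma upper3 {n : ℕ} (hn : 2 ≤ n) :
    ∃ B : Matrix (Fin n) (Fin 2) (Quaternion ℝ), Module.finrank ℝ (stabSub B) ≤
      1 + (n - 2) * (2 * (n - 2) + 1) := by
  let B : Matrix (Fin n) (Fin 2) (Quaternion ℝ) :=
    Matrix.of fun a l => ((2 : ℝ) ^ (2 - l.val)) • v2 n 2 a l
  have hB : ∀ a l, B a l = ((2 : ℝ) ^ (2 - l.val)) • v2 n 2 a l := fun _ _ => rfl
  refine ⟨B, ?_⟩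
  have h1 : Module.finrank ℝ (ℝ × skw (Quaternion ℝ) (n - 2)) =
      1 + (n - 2) * (2 * (n - 2) + 1) := by
    rw [Module.finrank_prod, finrank_sp]; simp
  rw [← h1]
  let g : stabSub B →ₗ[ℝ] ℝ :=
    { toFun := fun p => p.1.2.1.imI
      map_add' := by intro x y; rfl
      map_smul' := by intro x y; rfl }
  apply LinearMap.finrank_le_finrank_of_injective (f := g.prod (blk B))
  rw [← LinearMap.ker_eq_bot, LinearMap.ker_eq_bot']
  rintro ⟨⟨X, s, Y⟩, hp⟩ h
  obtain ⟨rfl, h1, h2, h3⟩ := v2_struct (by omega) (by omega) (by omega) hB hp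
  have hs : s = 0 := comm_I hp.2.1 h1 (congrArg Prod.fst h)
  have hY := blk_zero hp (congrArg Prod.snd h) (h3 hs)
  subst hs hY
  rfl

theorem stmt5 (m n : ℕ) (hm : 2 ≤ m) (hn : 1 ≤ n) :
    (3 ≤ m →
      IsLeast {d : ℕ | ∃ B : Matrix (Fin n) (Fin m) (Quaternion ℝ),
          d = Module.finrank ℝ (Submodule.span ℝ (stabSet5 B))}
        (if 4 * n + 1 < m then (m - 4 * n) * (m - 4 * n - 1) / 2
         else if m < n then (n - m) * (2 * (n - m) + 1) else 0)) ∧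
    (m = 2 → 2 ≤ n →
      IsLeast {d : ℕ | ∃ B : Matrix (Fin n) (Fin m) (Quaternion ℝ),
          d = Module.finrank ℝ (Submodule.span ℝ (stabSet5 B))}
        (1 + (n - 2) * (2 * (n - 2) + 1))) := by

  have hspan : ∀ (m : ℕ) (B : Matrix (Fin n) (Fin m) (Quaternion ℝ)),
      Module.finrank ℝ (Submodule.span ℝ (stabSet5 B)) = Module.finrank ℝ (stabSub B) := by
    intro m B
    rw [span_stab_s5]
  simp only [hspan]
  constructor
  · intro h3
    have hlow : ∀ B : Matrix (Fin n) (Fin m) (Quaternion ℝ),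
        (if 4 * n + 1 < m then (m - 4 * n) * (m - 4 * n - 1) / 2
         else if m < n then (n - m) * (2 * (n - m) + 1) else 0) ≤
          Module.finrank ℝ (stabSub B) := by
      intro B
      split_ifs
      · exact lower_so B
      · apply lower_sp
        simpa using lower_ker B
      · exact Nat.zero_le _
    refine ⟨?_, ?_⟩
    · obtain ⟨B, hB⟩ : ∃ B : Matrix (Fin n) (Fin m) (Quaternion ℝ),
          Module.finrank ℝ (stabSub B) ≤
          (if 4 * n + 1 < m then (m - 4 * n) * (m - 4 * n - 1) / 2
           else if m < n then (n - m) * (2 * (n - m) + 1) else 0) := by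
        by_cases hmn : n + 2 ≤ m
        · obtain ⟨B, hB⟩ := upper1 hn hmn
          refine ⟨B, ?_⟩
          split_ifs
          · exact hB
          · omega
          · have h4 : m - 4 * n - 1 = 0 := by omega
            simpa [h4] using hB
        · obtain ⟨B, hB⟩ := upper2 h3 (show m ≤ n + 1 by omega)
          refine ⟨B, ?_⟩
          split_ifs
          · omega
          · exact hB
          · have h4 : n - m = 0 := by omega
            simpa [h4] using hB
      exact ⟨B, le_antisymm (hlow B) hB⟩
    · rintro d ⟨B, rfl⟩
      exact hlow B
  · rintro rfl hn2
    refine ⟨?_, ?_⟩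
    · obtain ⟨B, hB⟩ := upper3 hn2
      exact ⟨B, le_antisymm (lower_two hn2 B) hB⟩
    · rintro d ⟨B, rfl⟩
      exact lower_two hn2 B
end
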